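/- arXiv:2103.04587 — 2 statements merged into one kernel-verified Lean document; each statement's English description precedes it below -/
import Mathlib

section
/- Let n ∈ ℕ and let H be a connected simple graph with |H| ≤ n. Then q(P_n ∨ H) = 2 if and only if |H| ≥ n − 2. -/
open Matrix Filter

/-- `A ∈ S(G)`: real symmetric matrix whose off-diagonal zero pattern is given by `G`. -/
def inS {V : Type*} (G : SimpleGraph V) (A : Matrix V V ℝ) : Prop :=
  A.IsSymm ∧ ∀ i j : V, i ≠ j → (A i j ≠ 0 ↔ G.Adj i j)

/-- The spectrum of a matrix, as the multiset of roots of its characteristic polynomial. -/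
noncomputable def specMultiset {V : Type*} [Fintype V] [DecidableEq V]
    (A : Matrix V V ℝ) : Multiset ℝ :=
  A.charpoly.roots

/-- The number of distinct eigenvalues of a matrix. -/
noncomputable def qMat {V : Type*} [Fintype V] [DecidableEq V] (A : Matrix V V ℝ) : ℕ :=
  (specMultiset A).toFinset.card

/-- `q(G)`: the minimum number of distinct eigenvalues over matrices in `S(G)`. -/
noncomputable def qGraph {V : Type*} [Fintype V] [DecidableEq V] (G : SimpleGraph V) : ℕ :=
  sInf {q | ∃ A : Matrix V V ℝ, inS G A ∧ qMat A = q}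

/-- The strong spectral property. -/
def HasSSP {V : Type*} [Fintype V] [DecidableEq V] (A : Matrix V V ℝ) : Prop :=
  ∀ X : Matrix V V ℝ, X.IsSymm → A * X = X * A →
    Matrix.hadamard A X = 0 → Matrix.hadamard (1 : Matrix V V ℝ) X = 0 → X = 0

/-- Generic realisability of a multiset of eigenvalues for a graph. -/
def GenericallyRealisable {V : Type*} [Fintype V] [DecidableEq V]
    (G : SimpleGraph V) (σ : Multiset ℝ) : Prop :=
  ∀ Y : Finset (V → ℝ), (∀ y ∈ Y, y ≠ 0) →
    ∃ (d : V → ℝ) (U : Matrix V V ℝ),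
      Multiset.map d Finset.univ.val = σ ∧ Uᵀ * U = 1 ∧
      inS G (U * Matrix.diagonal d * Uᵀ) ∧
      ∀ y ∈ Y, ∀ i, U.mulVec y i ≠ 0

/-- The partial join `(G₁, X) ∨ G₂`: the disjoint union of `G₁` and `G₂` together with all
edges joining vertices of `X ⊆ V(G₁)` to vertices of `G₂`. -/
def partialJoin {α β : Type*} (G₁ : SimpleGraph α) (X : Set α) (G₂ : SimpleGraph β) :
    SimpleGraph (α ⊕ β) where
  Adj x y :=
    (∃ a b, G₁.Adj a b ∧ x = Sum.inl a ∧ y = Sum.inl b) ∨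
    (∃ a b, G₂.Adj a b ∧ x = Sum.inr a ∧ y = Sum.inr b) ∨
    (∃ a ∈ X, ∃ b, x = Sum.inl a ∧ y = Sum.inr b) ∨
    (∃ a ∈ X, ∃ b, x = Sum.inr b ∧ y = Sum.inl a)
  symm := by
    refine ⟨?_⟩
    rintro x y (⟨a, b, hab, rfl, rfl⟩ | ⟨a, b, hab, rfl, rfl⟩ | ⟨a, ha, b, rfl, rfl⟩ |
      ⟨a, ha, b, rfl, rfl⟩)
    · exact Or.inl ⟨b, a, hab.symm, rfl, rfl⟩
    · exact Or.inr (Or.inl ⟨b, a, hab.symm, rfl, rfl⟩)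
    · exact Or.inr (Or.inr (Or.inr ⟨a, ha, b, rfl, rfl⟩))
    · exact Or.inr (Or.inr (Or.inl ⟨a, ha, b, rfl, rfl⟩))
  loopless := by
    refine ⟨?_⟩
    rintro x (⟨a, b, hab, rfl, h⟩ | ⟨a, b, hab, rfl, h⟩ | ⟨a, ha, b, rfl, h⟩ | ⟨a, ha, b, rfl, h⟩)
    · cases h; exact hab.ne rfl
    · cases h; exact hab.ne rfl
    · exact (Sum.inl_ne_inr h).elim
    · exact (Sum.inr_ne_inl h).elim

/-- The join `G₁ ∨ G₂` of two graphs. -/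
def graphJoin {α β : Type*} (G₁ : SimpleGraph α) (G₂ : SimpleGraph β) : SimpleGraph (α ⊕ β) :=
  partialJoin G₁ Set.univ G₂

/-- The disjoint union of a family of graphs. -/
def sigmaGraph {ι : Type*} {α : ι → Type*} (G : ∀ i, SimpleGraph (α i)) :
    SimpleGraph (Σ i, α i) where
  Adj x y := ∃ (i : ι) (a b : α i), (G i).Adj a b ∧ x = ⟨i, a⟩ ∧ y = ⟨i, b⟩
  symm := by
    refine ⟨?_⟩
    rintro x y ⟨i, a, b, hab, rfl, rfl⟩
    exact ⟨i, b, a, hab.symm, rfl, rfl⟩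
  loopless := by
    refine ⟨?_⟩
    rintro x ⟨i, a, b, hab, rfl, h⟩
    obtain rfl : a = b := by simpa using h
    exact hab.ne rfl

/-! If `A ∈ S(G)` has exactly the eigenvalues `l` and `m`, then `(A - l) * (A - m) = 0`, so the
ranks of `A - l` and `A - m` add up to at most `|G|`. When `P_n` is an induced subgraph of `G`, both
matrices contain a tridiagonal block with nonzero off-diagonal entries, hence both have rank at
least `n - 1`. For `G = P_n ∨ H` this gives `n ≤ |H| + 2`.

Conversely, pick a matrix in `S(H)` with simple spectrum, say `V * diag e * Vᵀ`, and `R` larger than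
all `|e i|`. The dilation `[[-diag e, diag s], [diag s, diag e]]` with `s i = √(R ^ 2 - e i ^ 2)`
squares to `R ^ 2`, and still does when the diagonal of its upper left block is extended by `R`, or
by `R` and `-R`, to bring that block to size `n`. The upper left block is diagonal with distinct
entries. Rotating it to its Lanczos basis makes it tridiagonal, and for a generic starting vector no
Lanczos vector is orthogonal to any of the finitely many columns of the rotated off-diagonal block.
The result lies in `S(P_n ∨ H)` and has the eigenvalues `±R`.
-/

section Spectrum

theorem aeval_diagonal {V R : Type*} [Fintype V] [DecidableEq V] [CommRing R] (d : V → R)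
    (p : Polynomial R) : Polynomial.aeval (diagonal d) p = diagonal fun i => p.eval (d i) := by
  refine (Polynomial.aeval_algHom_apply (diagonalAlgHom R) d p).trans ?_
  rw [Polynomial.aeval_pi]
  rfl

variable {V : Type*} [Fintype V] [DecidableEq V] {A : Matrix V V ℝ}

theorem mem_specMultiset_iff_mem_spectrum {r : ℝ} : r ∈ specMultiset A ↔ r ∈ spectrum ℝ A := by
  rw [specMultiset, Polynomial.mem_roots A.charpoly_monic.ne_zero,
    Matrix.mem_spectrum_iff_isRoot_charpoly]

theorem aeval_eq_zero_of_forall_mem_specMultiset (hA : A.IsSymm) {p : Polynomial ℝ}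
    (hp : ∀ r ∈ specMultiset A, p.eval r = 0) : Polynomial.aeval A p = 0 := by
  have hA' : A.IsHermitian := isHermitian_iff_isSymm.2 hA
  have hroot (i : V) : p.eval (hA'.eigenvalues i) = 0 :=
    hp _ (mem_specMultiset_iff_mem_spectrum.2 (hA'.eigenvalues_mem_spectrum_real i))
  rw [hA'.spectral_theorem, Polynomial.aeval_algHom_apply, aeval_diagonal]
  simp [hroot, ← Pi.zero_def]

theorem exists_sub_smul_one_mul_eq_zero_of_qMat_eq_two (hA : A.IsSymm) (hq : qMat A = 2) :
    ∃ l m : ℝ, (A - l • 1) * (A - m • 1) = 0 := by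
  obtain ⟨l, m, -, hlm⟩ := Finset.card_eq_two.1 hq
  refine ⟨l, m, ?_⟩
  have h := aeval_eq_zero_of_forall_mem_specMultiset hA
    (p := (Polynomial.X - Polynomial.C l) * (Polynomial.X - Polynomial.C m)) fun r hr => by
      have : r ∈ (specMultiset A).toFinset := Multiset.mem_toFinset.2 hr
      simpa [hlm, sub_eq_zero] using this
  simpa [Algebra.algebraMap_eq_smul_one] using h

theorem two_le_qMat_of_inS {G : SimpleGraph V} (hA : inS G A) {u v : V} (huv : G.Adj u v) :
    2 ≤ qMat A := by
  by_contra! hlt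
  obtain ⟨r, hr⟩ : ∃ r, ∀ s ∈ specMultiset A, s = r := by
    have hcard : (specMultiset A).toFinset.card ≤ 1 := Nat.lt_succ_iff.1 hlt
    obtain ⟨r, hr⟩ := Finset.card_le_one_iff_subset_singleton.1 hcard
    exact ⟨r, fun s hs => Finset.mem_singleton.1 (hr (Multiset.mem_toFinset.2 hs))⟩
  have hscalar : A = r • 1 := by
    have h := aeval_eq_zero_of_forall_mem_specMultiset hA.1
      (p := Polynomial.X - Polynomial.C r) fun s hs => by simp [hr s hs]
    simpa [Algebra.algebraMap_eq_smul_one, sub_eq_zero] using h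
  refine (hA.2 u v huv.ne).2 huv ?_
  simp [hscalar, huv.ne]

theorem qMat_le_two_of_mul_self_eq {R : ℝ} (hA : A * A = R ^ 2 • 1) : qMat A ≤ 2 := by
  refine (Finset.card_le_card fun r hr => ?_).trans (Finset.card_le_two (a := R) (b := -R))
  have hr : r ∈ spectrum ℝ A := mem_specMultiset_iff_mem_spectrum.1 (Multiset.mem_toFinset.1 hr)
  have : Nonempty V := by
    by_contra! h
    simp [spectrum.of_subsingleton] at hr
  have hsq : r ^ 2 ∈ spectrum ℝ (A ^ 2) := spectrum.pow_image_subset A 2 ⟨r, hr, rfl⟩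
  rw [pow_two A, hA, ← Algebra.algebraMap_eq_smul_one, spectrum.scalar_eq,
    Set.mem_singleton_iff, sq_eq_sq_iff_eq_or_eq_neg] at hsq
  simpa using hsq

theorem qGraph_eq_two_of_mul_self_eq {G : SimpleGraph V} (hA : inS G A) {R : ℝ}
    (hsq : A * A = R ^ 2 • 1) {u v : V} (huv : G.Adj u v) : qGraph G = 2 := by
  have hq : qMat A = 2 := (qMat_le_two_of_mul_self_eq hsq).antisymm (two_le_qMat_of_inS hA huv)
  refine le_antisymm (Nat.sInf_le ⟨A, hA, hq⟩) (le_csInf ⟨2, A, hA, hq⟩ ?_)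
  rintro _ ⟨B, hB, rfl⟩
  exact two_le_qMat_of_inS hB huv

theorem exists_inS_qMat_eq_qGraph {G : SimpleGraph V} (hG : qGraph G ≠ 0) :
    ∃ A, inS G A ∧ qMat A = qGraph G :=
  Nat.sInf_mem (Nat.nonempty_of_sInf_eq_succ (Nat.succ_pred_eq_of_ne_zero hG).symm)

end Spectrum

section LowerBound

theorem inS.submatrix {V W : Type*} {G : SimpleGraph V} {G' : SimpleGraph W}
    {A : Matrix V V ℝ} (hA : inS G A) (f : G' ↪g G) : inS G' (A.submatrix f f) :=
  ⟨hA.1.submatrix f, fun i j hij =>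
    (hA.2 (f i) (f j) (f.injective.ne hij)).trans f.map_rel_iff⟩

theorem inS.sub_smul_one {V : Type*} [DecidableEq V] {G : SimpleGraph V} {A : Matrix V V ℝ}
    (hA : inS G A) (r : ℝ) : inS G (A - r • 1) :=
  ⟨hA.1.sub (isSymm_one.smul r), fun i j hij => by simpa [hij] using hA.2 i j hij⟩

theorem le_rank_add_one_of_inS_pathGraph {n : ℕ} {T : Matrix (Fin n) (Fin n) ℝ}
    (hT : inS (SimpleGraph.pathGraph n) T) : n ≤ T.rank + 1 := by
  obtain _ | k := n
  · exact Nat.zero_le _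
  let L : Matrix (Fin k) (Fin k) ℝ := T.submatrix Fin.castSucc Fin.succ
  have hL : L.IsLowerTriangular := fun i j hij => by
    have hij : (i : ℕ) < j := hij
    by_contra h
    have hadj := (hT.2 _ _ (by simp [Fin.ext_iff]; lia)).1 h
    simp [SimpleGraph.pathGraph_adj] at hadj
    lia
  have hdiag (i : Fin k) : L i i ≠ 0 :=
    (hT.2 _ _ Fin.castSucc_lt_succ.ne).2 (by simp [SimpleGraph.pathGraph_adj])
  have hunit : IsUnit L := by
    rw [isUnit_iff_isUnit_det, det_of_isLowerTriangular _ hL, isUnit_iff_ne_zero]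
    exact Finset.prod_ne_zero_iff.2 fun i _ => hdiag i
  have hrank := T.rank_submatrix_le Fin.castSucc (Fin.succ (n := k))
  rw [rank_of_isUnit L hunit, Fintype.card_fin] at hrank
  lia

theorem two_mul_le_card_add_two_of_qGraph_eq_two {V : Type*} [Fintype V] [DecidableEq V]
    {G : SimpleGraph V} {n : ℕ} (f : SimpleGraph.pathGraph n ↪g G) (hG : qGraph G = 2) :
    2 * n ≤ Fintype.card V + 2 := by
  obtain ⟨A, hA, hq⟩ := exists_inS_qMat_eq_qGraph (G := G) (by lia)
  obtain ⟨l, m, hlm⟩ := exists_sub_smul_one_mul_eq_zero_of_qMat_eq_two hA.1 (hq.trans hG)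
  have hrank (r : ℝ) : n ≤ (A - r • 1).rank + 1 := by
    have h := le_rank_add_one_of_inS_pathGraph ((hA.sub_smul_one r).submatrix f)
    have := (A - r • 1).rank_submatrix_le f f
    lia
  have := rank_add_rank_le_card_of_mul_eq_zero hlm
  have := hrank l
  have := hrank m
  lia

end LowerBound

section Join

variable {α β : Type*} {G : SimpleGraph α} {H : SimpleGraph β}

theorem graphJoin_adj_inl_inl {a b : α} :
    (graphJoin G H).Adj (.inl a) (.inl b) ↔ G.Adj a b := by
  simp [graphJoin, partialJoin]

theorem graphJoin_adj_inr_inr {a b : β} :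
    (graphJoin G H).Adj (.inr a) (.inr b) ↔ H.Adj a b := by
  simp [graphJoin, partialJoin]

theorem graphJoin_adj_inl_inr (a : α) (b : β) : (graphJoin G H).Adj (.inl a) (.inr b) := by
  simp [graphJoin, partialJoin]

/-- The left factor of a join as an induced subgraph. -/
def graphJoinInl (G : SimpleGraph α) (H : SimpleGraph β) : G ↪g graphJoin G H :=
  ⟨Function.Embedding.inl, graphJoin_adj_inl_inl⟩

theorem inS_graphJoin_fromBlocks {T : Matrix α α ℝ} {B : Matrix α β ℝ} {C : Matrix β β ℝ}
    (hT : inS G T) (hB : ∀ a b, B a b ≠ 0) (hC : inS H C) :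
    inS (graphJoin G H) (fromBlocks T B Bᵀ C) := by
  refine ⟨hT.1.fromBlocks rfl hC.1, ?_⟩
  rintro (a | a) (b | b) hab
  · exact (hT.2 a b (by simpa using hab)).trans graphJoin_adj_inl_inl.symm
  · exact iff_of_true (hB a b) (graphJoin_adj_inl_inr a b)
  · exact iff_of_true (hB b a) (graphJoin_adj_inl_inr b a).symm
  · exact (hC.2 a b (by simpa using hab)).trans graphJoin_adj_inr_inr.symm

end Join

section SimpleSpectrum

open Polynomial in
theorem exists_ne_zero_eval_ne_zero {R : Type*} [CommRing R] [IsDomain R] [Infinite R] {p : R[X]}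
    (hp : p ≠ 0) : ∃ t : R, t ≠ 0 ∧ p.eval t ≠ 0 := by
  obtain ⟨t, ht⟩ : ∃ t, (X * p).eval t ≠ 0 := by
    by_contra! h
    exact mul_ne_zero X_ne_zero hp (Polynomial.funext (by simpa using h))
  rw [eval_mul, eval_X] at ht
  exact ⟨t, left_ne_zero_of_mul ht, right_ne_zero_of_mul ht⟩

open Polynomial in
theorem exists_ne_zero_separable_map_evalRingHom {K : Type*} [Field K] [CharZero K]
    {p : K[X][X]} (hp : p.Monic) (h0 : (p.map (evalRingHom 0)).Separable) :
    ∃ t : K, t ≠ 0 ∧ (p.map (evalRingHom t)).Separable := by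
  have hsep (t : K) : (p.map (evalRingHom t)).Separable ↔
      (p.resultant p.derivative).eval t ≠ 0 := by
    rw [Polynomial.separable_def, ← isUnit_resultant_iff_isCoprime (hp.map _), isUnit_iff_ne_zero,
      ← coe_evalRingHom, ← resultant_map_map, derivative_map, ← derivative_map,
      natDegree_derivative, hp.natDegree_map, natDegree_derivative]
  obtain ⟨t, ht, hpt⟩ := exists_ne_zero_eval_ne_zero (p := p.resultant p.derivative) fun h =>
    (hsep 0).1 h0 (by rw [h, eval_zero])
  exact ⟨t, ht, (hsep t).2 hpt⟩

open Polynomial in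
theorem exists_ne_zero_separable_charpoly_add_smul {K β : Type*} [Field K] [CharZero K]
    [Fintype β] [DecidableEq β] {A : Matrix β β K} (B : Matrix β β K) (hA : A.charpoly.Separable) :
    ∃ t : K, t ≠ 0 ∧ (A + t • B).charpoly.Separable := by
  let M : Matrix β β K[X] := A.map C + (X : K[X]) • B.map C
  have hM (t : K) : M.charpoly.map (evalRingHom t) = (A + t • B).charpoly := by
    rw [← charpoly_map]
    congr 1
    ext i j
    simpa [M] using mul_comm _ _
  obtain ⟨t, ht, hsep⟩ := exists_ne_zero_separable_map_evalRingHom M.charpoly_monic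
    (by rwa [hM, zero_smul, add_zero])
  exact ⟨t, ht, hM t ▸ hsep⟩

theorem exists_inS_charpoly_separable {β : Type*} [Fintype β] [DecidableEq β]
    (H : SimpleGraph β) : ∃ C, inS H C ∧ C.charpoly.Separable := by
  classical
  let d (i : β) : ℝ := (Fintype.equivFin β i : ℕ)
  have hd : Function.Injective d := Nat.cast_injective.comp
    (Fin.val_injective.comp (Fintype.equivFin β).injective)
  have hsepd : (diagonal d).charpoly.Separable := by
    rwa [charpoly_diagonal, Polynomial.separable_prod_X_sub_C_iff]
  obtain ⟨t, ht, hsep⟩ := exists_ne_zero_separable_charpoly_add_smul (H.adjMatrix ℝ) hsepd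
  refine ⟨_, ⟨(isSymm_diagonal d).add (H.isSymm_adjMatrix.smul t), fun i j hij => ?_⟩, hsep⟩
  simp [hij, ht, SimpleGraph.adjMatrix_apply]

theorem eigenvalues_injective_of_charpoly_separable {β : Type*} [Fintype β] [DecidableEq β]
    {C : Matrix β β ℝ} (hC : C.IsHermitian) (hsep : C.charpoly.Separable) :
    Function.Injective hC.eigenvalues := by
  rwa [hC.charpoly_eq, Polynomial.separable_prod_X_sub_C_iff] at hsep

end SimpleSpectrum

section Lanczos

open InnerProductSpace Module

variable {𝕜 E : Type*} [RCLike 𝕜] [NormedAddCommGroup E] [InnerProductSpace 𝕜 E]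

section GramSchmidt

variable {ι : Type*} [LinearOrder ι] [LocallyFiniteOrderBot ι] [WellFoundedLT ι]

theorem inner_gramSchmidt_eq_zero_of_mem_span_Iio (f : ι → E) {n : ι} {x : E}
    (hx : x ∈ Submodule.span 𝕜 (f '' Set.Iio n)) : ⟪gramSchmidt 𝕜 f n, x⟫_𝕜 = 0 := by
  induction hx using Submodule.span_induction with
  | mem x hx =>
    obtain ⟨i, hi, rfl⟩ := hx
    exact gramSchmidt_inv_triangular 𝕜 f hi
  | zero => exact inner_zero_right _
  | add x y _ _ hx hy => rw [inner_add_right, hx, hy, add_zero]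
  | smul c x _ hx => rw [inner_smul_right, hx, mul_zero]

theorem sub_gramSchmidt_mem_span_Iio (f : ι → E) (n : ι) :
    f n - gramSchmidt 𝕜 f n ∈ Submodule.span 𝕜 (f '' Set.Iio n) := by
  rw [gramSchmidt_def, sub_sub_cancel, ← span_gramSchmidt_Iio]
  refine Submodule.sum_mem _ fun i hi => ?_
  rw [Submodule.starProjection_singleton]
  exact Submodule.smul_mem _ _ (Submodule.subset_span ⟨i, Finset.mem_Iio.1 hi, rfl⟩)

theorem exists_sum_smul_eq_gramSchmidt (f : ℕ → E) (a : ℕ) :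
    ∃ v : Fin (a + 1) → 𝕜, v ≠ 0 ∧ ∑ b, v b • f b = gramSchmidt 𝕜 f a := by
  have himage : f '' Set.Iio a = Set.range fun b : Fin a => f b := by
    ext x
    simp [Fin.exists_iff]
  have h := sub_gramSchmidt_mem_span_Iio (𝕜 := 𝕜) f a
  rw [himage] at h
  obtain ⟨u, hu⟩ := (Submodule.mem_span_range_iff_exists_fun 𝕜).1 h
  refine ⟨Fin.snoc (-u) 1, fun hzero => ?_, ?_⟩
  · simpa using congrFun hzero (Fin.last a)
  · simp [Fin.sum_univ_castSucc, hu]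

theorem inner_gramSchmidt_ne_zero_of_det_ne_zero {f : ℕ → E} {a : ℕ} {x : E}
    (h : (of fun b c : Fin (a + 1) =>
      ⟪Function.update (fun i : Fin (a + 1) => f i) (Fin.last a) x b, f c⟫_𝕜).det ≠ 0) :
    ⟪x, gramSchmidt 𝕜 f a⟫_𝕜 ≠ 0 := by
  contrapose! h
  obtain ⟨v, hv, hsum⟩ := exists_sum_smul_eq_gramSchmidt (𝕜 := 𝕜) f a
  refine exists_mulVec_eq_zero_iff.1 ⟨v, hv, ?_⟩
  have hmulVec (y : Fin (a + 1) → E) :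
      of (fun b c : Fin (a + 1) => ⟪y b, f c⟫_𝕜) *ᵥ v = fun b => ⟪y b, gramSchmidt 𝕜 f a⟫_𝕜 := by
    ext b
    simp [mulVec, dotProduct, ← hsum, inner_sum, inner_smul_right, mul_comm]
  rw [hmulVec]
  ext b
  cases b using Fin.lastCases with
  | last => simpa using h
  | cast b =>
    rw [Function.update_of_ne (Fin.castSucc_ne_last b), Pi.zero_apply, inner_eq_zero_symm]
    exact gramSchmidt_inv_triangular 𝕜 f b.2

end GramSchmidt

/-- The Krylov sequence `w, T w, T² w, …` of `T` with starting vector `w`. Its Gram–Schmidt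
orthogonalization is the Lanczos basis, in which a symmetric `T` becomes tridiagonal. -/
def krylov (T : End 𝕜 E) (w : E) (k : ℕ) : E :=
  (T ^ k) w

variable (T : End 𝕜 E) (w : E)

theorem krylov_succ (k : ℕ) : krylov T w (k + 1) = T (krylov T w k) := by
  rw [krylov, pow_succ', End.mul_apply, krylov]

theorem map_mem_span_krylov_Iio {k : ℕ} {x : E}
    (hx : x ∈ Submodule.span 𝕜 (krylov T w '' Set.Iio k)) :
    T x ∈ Submodule.span 𝕜 (krylov T w '' Set.Iio (k + 1)) := by
  refine (Submodule.map_span_le T _ _).2 ?_ (Submodule.mem_map_of_mem hx)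
  rintro _ ⟨i, hi, rfl⟩
  exact Submodule.subset_span ⟨i + 1, Nat.succ_lt_succ hi, krylov_succ T w i⟩

theorem map_gramSchmidt_krylov_sub_mem_span_Iio (k : ℕ) :
    T (gramSchmidt 𝕜 (krylov T w) k) - gramSchmidt 𝕜 (krylov T w) (k + 1) ∈
      Submodule.span 𝕜 (krylov T w '' Set.Iio (k + 1)) := by
  have h := Submodule.sub_mem _ (sub_gramSchmidt_mem_span_Iio (𝕜 := 𝕜) (krylov T w) (k + 1))
    (map_mem_span_krylov_Iio T w (sub_gramSchmidt_mem_span_Iio (krylov T w) k))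
  rwa [map_sub, ← krylov_succ, sub_sub_sub_cancel_left] at h

theorem inner_gramSchmidt_krylov_map_gramSchmidt {a b : ℕ} (hba : b < a) :
    ⟪gramSchmidt 𝕜 (krylov T w) a, T (gramSchmidt 𝕜 (krylov T w) b)⟫_𝕜 =
      ⟪gramSchmidt 𝕜 (krylov T w) a, gramSchmidt 𝕜 (krylov T w) (b + 1)⟫_𝕜 := by
  rw [← sub_eq_zero, ← inner_sub_right]
  exact inner_gramSchmidt_eq_zero_of_mem_span_Iio _ (Submodule.span_mono
    (Set.image_mono (Set.Iio_subset_Iio hba)) (map_gramSchmidt_krylov_sub_mem_span_Iio T w b))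

theorem inner_gramSchmidt_krylov_map_ne_zero_iff {a b : ℕ} (hba : b < a)
    (ha : gramSchmidt 𝕜 (krylov T w) a ≠ 0) :
    ⟪gramSchmidt 𝕜 (krylov T w) a, T (gramSchmidt 𝕜 (krylov T w) b)⟫_𝕜 ≠ 0 ↔ b + 1 = a := by
  rw [inner_gramSchmidt_krylov_map_gramSchmidt T w hba]
  refine ⟨fun h => by_contra fun hne => h (gramSchmidt_orthogonal 𝕜 _ (Ne.symm hne)), ?_⟩
  rintro rfl
  exact inner_self_ne_zero.2 ha

variable {T} in
theorem inner_gramSchmidtNormed_krylov_map_ne_zero_iff (hT : T.IsSymmetric) {a b : ℕ}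
    (hab : a ≠ b) (ha : gramSchmidt 𝕜 (krylov T w) a ≠ 0)
    (hb : gramSchmidt 𝕜 (krylov T w) b ≠ 0) :
    ⟪gramSchmidtNormed 𝕜 (krylov T w) a, T (gramSchmidtNormed 𝕜 (krylov T w) b)⟫_𝕜 ≠ 0 ↔
      a + 1 = b ∨ b + 1 = a := by
  simp only [gramSchmidtNormed, map_smul, inner_smul_left, inner_smul_right, ne_eq, mul_eq_zero,
    map_eq_zero, inv_eq_zero, norm_eq_zero, ha, hb, false_or]
  rcases hab.lt_or_gt with h | h
  · rw [← hT, inner_eq_zero_symm, ← ne_eq, inner_gramSchmidt_krylov_map_ne_zero_iff T w h hb]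
    lia
  · rw [← ne_eq, inner_gramSchmidt_krylov_map_ne_zero_iff T w h ha]
    lia

end Lanczos

section Genericity

/-- The matrix whose rows are `w, D w, …, D ^ (m - 1) w`, where `D` is the diagonal matrix
with entries `d`. -/
def krylovMatrix {R ι : Type*} [Semiring R] (d w : ι → R) (m : ℕ) : Matrix (Fin m) ι R :=
  of fun b l => d l ^ (b : ℕ) * w l

/-- The determinant of the inner products of `w, D w, …, D ^ (a - 1) w, x` with
`w, D w, …, D ^ a w`. Its nonvanishing says that the `a`-th Lanczos vector of the diagonal matrix
`D` is not orthogonal to `x`; being polynomial in `w`, it is generically nonzero as soon as it is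
nonzero for one `w`. -/
def krylovDet {R ι : Type*} [CommRing R] [Fintype ι] (d w x : ι → R) (a : ℕ) : R :=
  ((krylovMatrix d w (a + 1)).updateRow (Fin.last a) x * (krylovMatrix d w (a + 1))ᵀ).det

variable {R ι : Type*}

theorem map_krylovMatrix {S : Type*} [Semiring R] [Semiring S] (φ : R →+* S) (d w : ι → R)
    (m : ℕ) : (krylovMatrix d w m).map φ = krylovMatrix (φ ∘ d) (φ ∘ w) m := by
  ext
  simp [krylovMatrix]

theorem map_krylovDet {S : Type*} [CommRing R] [CommRing S] [Fintype ι] (φ : R →+* S)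
    (d w x : ι → R) (a : ℕ) : φ (krylovDet d w x a) = krylovDet (φ ∘ d) (φ ∘ w) (φ ∘ x) a := by
  simp only [krylovDet, RingHom.map_det, RingHom.mapMatrix_apply, Matrix.map_mul, transpose_map,
    map_updateRow, map_krylovMatrix]

theorem det_krylovMatrix [CommRing R] {m : ℕ} (d w : Fin m → R) :
    (krylovMatrix d w m).det = (vandermonde d).det * ∏ i, w i := by
  have : krylovMatrix d w m = (vandermonde d)ᵀ * diagonal w := by
    ext
    simp [krylovMatrix, vandermonde]
  rw [this, det_mul, det_transpose, det_diagonal]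

theorem krylovDet_extend [CommRing R] [Fintype ι] {a : ℕ} (f : Fin (a + 1) ↪ ι) (d x : ι → R)
    (y : Fin (a + 1) → R) :
    krylovDet d (Function.extend f y 0) x a =
      ((krylovMatrix (d ∘ f) y (a + 1)).updateRow (Fin.last a) (x ∘ f)).det *
        (krylovMatrix (d ∘ f) y (a + 1)).det := by
  rw [← det_transpose (krylovMatrix (d ∘ f) y (a + 1)), ← det_mul, krylovDet]
  congr 1
  ext b c
  rw [mul_apply, mul_apply]
  symm
  refine Fintype.sum_of_injective f f.injective _ _ (fun l hl => ?_) fun i => ?_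
  · simp [krylovMatrix, Function.extend_apply' _ _ _ hl]
  · cases b using Fin.lastCases <;>
      simp [krylovMatrix, f.injective.extend_apply, updateRow_ne, Fin.castSucc_ne_last]

theorem det_updateRow_krylovMatrix_snoc_zero [CommRing R] {a : ℕ} (d x : Fin (a + 1) → R)
    (y : Fin a → R) :
    ((krylovMatrix d (Fin.snoc y 0) (a + 1)).updateRow (Fin.last a) x).det =
      x (Fin.last a) * (krylovMatrix (d ∘ Fin.castSucc) y a).det := by
  rw [det_succ_column _ (Fin.last a), Finset.sum_eq_single_of_mem (Fin.last a) (Finset.mem_univ _)]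
  · congr 1
    · simp
    · congr 1
      ext
      simp [krylovMatrix, updateRow_ne, Fin.castSucc_ne_last]
  · intro b _ hb
    simp [updateRow_ne hb, krylovMatrix]

theorem det_krylovMatrix_ne_zero [CommRing R] [IsDomain R] {m : ℕ} {d w : Fin m → R}
    (hd : Function.Injective d) (hw : ∀ i, w i ≠ 0) : (krylovMatrix d w m).det ≠ 0 := by
  rw [det_krylovMatrix]
  exact mul_ne_zero (det_vandermonde_ne_zero_iff.2 hd) (Finset.prod_ne_zero_iff.2 fun i _ => hw i)

open Polynomial in
theorem exists_forall_ne_zero_det_updateRow_krylovMatrix_ne_zero [CommRing R] [IsDomain R]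
    [Infinite R] {a : ℕ} {d x : Fin (a + 1) → R} (hd : Function.Injective d)
    (hx : x (Fin.last a) ≠ 0) :
    ∃ y : Fin (a + 1) → R, (∀ i, y i ≠ 0) ∧
      ((krylovMatrix d y (a + 1)).updateRow (Fin.last a) x).det ≠ 0 := by
  let p : R[X] := ((krylovMatrix (C ∘ d) (Fin.snoc 1 X) (a + 1)).updateRow (Fin.last a) (C ∘ x)).det
  have hp (t : R) : p.eval t =
      ((krylovMatrix d (Fin.snoc 1 t) (a + 1)).updateRow (Fin.last a) x).det := by
    have hC (z : Fin (a + 1) → R) : evalRingHom t ∘ C ∘ z = z := by ext; simp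
    have hsnoc : evalRingHom t ∘ Fin.snoc 1 X = (Fin.snoc 1 t : Fin (a + 1) → R) := by
      rw [Fin.comp_snoc, coe_evalRingHom, eval_X]
      congr 1
      ext
      simp
    rw [← coe_evalRingHom, RingHom.map_det, RingHom.mapMatrix_apply, map_updateRow,
      map_krylovMatrix, hC, hC, hsnoc]
  -- At `t = 0` the determinant expands along its last column into a smaller Krylov determinant.
  have hp0 : p ≠ 0 := fun h => by
    have hcast : Function.Injective (d ∘ Fin.castSucc) := hd.comp (Fin.castSucc_injective a)
    refine mul_ne_zero hx (det_krylovMatrix_ne_zero (w := 1) hcast fun _ => one_ne_zero) ?_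
    rw [← det_updateRow_krylovMatrix_snoc_zero, ← hp, h, eval_zero]
  obtain ⟨t, ht, hpt⟩ := exists_ne_zero_eval_ne_zero hp0
  exact ⟨Fin.snoc 1 t, Fin.lastCases (by simpa using ht) (by simp), hp t ▸ hpt⟩

theorem exists_krylovDet_ne_zero [Fintype ι] [CommRing R] [IsDomain R] [Infinite R] {d x : ι → R}
    (hd : Function.Injective d) (hx : x ≠ 0) {a : ℕ} (ha : a < Fintype.card ι) :
    ∃ w, krylovDet d w x a ≠ 0 := by
  classical
  obtain ⟨k, hk⟩ := Function.ne_iff.1 hx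
  obtain ⟨f, hf⟩ : ∃ f : Fin (a + 1) ↪ ι, f (Fin.last a) = k := by
    obtain ⟨e⟩ := Function.Embedding.nonempty_of_card_le (α := Fin (a + 1)) (β := ι) (by simpa)
    exact ⟨e.trans (Equiv.swap (e (Fin.last a)) k).toEmbedding, by simp⟩
  have hdf : Function.Injective (d ∘ f) := hd.comp f.injective
  obtain ⟨y, hy, hdet⟩ := exists_forall_ne_zero_det_updateRow_krylovMatrix_ne_zero hdf
    (x := x ∘ f) (by simpa [hf] using hk)
  -- With `w` supported on `a + 1` indices, both factors of `krylovDet` become square.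
  refine ⟨Function.extend f y 0, ?_⟩
  rw [krylovDet_extend]
  exact mul_ne_zero hdet (det_krylovMatrix_ne_zero hdf hy)

theorem exists_forall_eval_ne_zero {κ σ : Type*} [Finite κ] [CommRing R] [IsDomain R] [Infinite R]
    {p : κ → MvPolynomial σ R} (hp : ∀ i, p i ≠ 0) :
    ∃ w, ∀ i, MvPolynomial.eval w (p i) ≠ 0 := by
  have := Fintype.ofFinite κ
  obtain ⟨w, hw⟩ : ∃ w, MvPolynomial.eval w (∏ i, p i) ≠ 0 := by
    by_contra! h
    exact Finset.prod_ne_zero_iff.2 (fun i _ => hp i) (MvPolynomial.funext (by simpa using h))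
  rw [map_prod] at hw
  exact ⟨w, fun i => Finset.prod_ne_zero_iff.1 hw i (Finset.mem_univ i)⟩

theorem exists_forall_krylovDet_ne_zero {κ : Type*} [Finite κ] [Fintype ι] [CommRing R]
    [IsDomain R] [Infinite R] {d : ι → R} (hd : Function.Injective d) {x : κ → ι → R}
    (hx : ∀ j, x j ≠ 0) :
    ∃ w, ∀ a < Fintype.card ι, ∀ j, krylovDet d w (x j) a ≠ 0 := by
  let p (i : Fin (Fintype.card ι) × κ) : MvPolynomial ι R :=
    krylovDet (MvPolynomial.C ∘ d) MvPolynomial.X (MvPolynomial.C ∘ x i.2) i.1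
  have hp (w : ι → R) (i) : MvPolynomial.eval w (p i) = krylovDet d w (x i.2) i.1 := by
    rw [map_krylovDet]
    congr 1 <;> ext <;> simp
  obtain ⟨w, hw⟩ := exists_forall_eval_ne_zero (p := p) fun i hi => by
    obtain ⟨w, hw⟩ := exists_krylovDet_ne_zero hd (hx i.2) i.1.2
    exact hw (by rw [← hp, hi, map_zero])
  exact ⟨w, fun a ha j => hp w (⟨a, ha⟩, j) ▸ hw (⟨a, ha⟩, j)⟩

end Genericity

section DiagonalLanczos

open InnerProductSpace

variable {ι : Type*} [Fintype ι] [DecidableEq ι]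

theorem isSymmetric_toEuclideanLin_diagonal (d : ι → ℝ) :
    (toEuclideanLin (diagonal d)).IsSymmetric :=
  isSymmetric_toEuclideanLin_iff.2 (isHermitian_iff_isSymm.2 (isSymm_diagonal d))

theorem krylov_toEuclideanLin_diagonal (d w : ι → ℝ) (k : ℕ) :
    krylov (toEuclideanLin (diagonal d)) (WithLp.toLp 2 w) k =
      WithLp.toLp 2 fun l => d l ^ k * w l := by
  induction k with
  | zero => simp [krylov]
  | succ k ih =>
    rw [krylov_succ, ih, toLpLin_toLp]
    congr 1
    ext l
    rw [toLin'_apply, mulVec_diagonal, pow_succ', mul_assoc]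

theorem inner_gramSchmidt_krylov_ne_zero_of_krylovDet_ne_zero {d w x : ι → ℝ} {a : ℕ}
    (h : krylovDet d w x a ≠ 0) :
    ⟪WithLp.toLp 2 x, gramSchmidt ℝ
      (krylov (toEuclideanLin (diagonal d)) (WithLp.toLp 2 w)) a⟫_ℝ ≠ 0 := by
  refine inner_gramSchmidt_ne_zero_of_det_ne_zero ?_
  convert h
  rw [krylovDet]
  congr 1
  ext b c
  cases b using Fin.lastCases <;>
    simp [krylov_toEuclideanLin_diagonal, krylovMatrix, mul_apply, PiLp.inner_apply, updateRow_ne,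
      Fin.castSucc_ne_last, mul_comm]

/-- The matrix whose rows are the first `n` normalized Lanczos vectors of the diagonal matrix with
entries `d`, with starting vector `w`. -/
noncomputable def lanczosMatrix (d w : ι → ℝ) (n : ℕ) : Matrix (Fin n) ι ℝ :=
  of fun a => (gramSchmidtNormed ℝ
    (krylov (toEuclideanLin (diagonal d)) (WithLp.toLp 2 w)) a).ofLp

variable {n : ℕ} {d w : ι → ℝ}

theorem row_lanczosMatrix (a : Fin n) :
    (lanczosMatrix d w n).row a = (gramSchmidtNormed ℝ
      (krylov (toEuclideanLin (diagonal d)) (WithLp.toLp 2 w)) a).ofLp :=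
  rfl

theorem row_lanczosMatrix_eq_zero_iff {a : Fin n} :
    (lanczosMatrix d w n).row a = 0 ↔
      gramSchmidt ℝ (krylov (toEuclideanLin (diagonal d)) (WithLp.toLp 2 w)) a = 0 := by
  simp [row_lanczosMatrix, gramSchmidtNormed]

theorem lanczosMatrix_mul_transpose (hrow : ∀ a, (lanczosMatrix d w n).row a ≠ 0) :
    lanczosMatrix d w n * (lanczosMatrix d w n)ᵀ = 1 := by
  have hu := (gramSchmidtNormed_orthonormal' (𝕜 := ℝ)
    (krylov (toEuclideanLin (diagonal d)) (WithLp.toLp 2 w))).comp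
      (fun a : Fin n => ⟨a, fun h => hrow a (congrArg WithLp.ofLp h)⟩)
      fun a b h => Fin.ext (Subtype.ext_iff.1 h)
  ext a b
  rw [one_apply, ← orthonormal_iff_ite.1 hu a b]
  simp [lanczosMatrix, mul_apply, PiLp.inner_apply, mul_comm]

theorem inS_pathGraph_lanczosMatrix_mul_diagonal_mul_transpose
    (hrow : ∀ a, (lanczosMatrix d w n).row a ≠ 0) :
    inS (SimpleGraph.pathGraph n)
      (lanczosMatrix d w n * diagonal d * (lanczosMatrix d w n)ᵀ) := by
  refine ⟨by simp [IsSymm, Matrix.mul_assoc], fun a b hab => ?_⟩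
  rw [SimpleGraph.pathGraph_adj, ← inner_gramSchmidtNormed_krylov_map_ne_zero_iff _
    (isSymmetric_toEuclideanLin_diagonal d) (Fin.val_injective.ne hab)
    (row_lanczosMatrix_eq_zero_iff.not.1 (hrow a)) (row_lanczosMatrix_eq_zero_iff.not.1 (hrow b))]
  rw [mul_apply]
  simp [lanczosMatrix, PiLp.inner_apply, toLpLin_apply, mulVec_diagonal, mul_assoc,
    mul_left_comm, mul_comm]

theorem lanczosMatrix_mulVec_ne_zero {x : ι → ℝ} {a : Fin n} (h : krylovDet d w x a ≠ 0) :
    (lanczosMatrix d w n *ᵥ x) a ≠ 0 := by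
  have hx := inner_gramSchmidt_krylov_ne_zero_of_krylovDet_ne_zero h
  have hne : gramSchmidt ℝ (krylov (toEuclideanLin (diagonal d)) (WithLp.toLp 2 w)) a ≠ 0 :=
    fun h0 => hx (by rw [h0, inner_zero_right])
  have hmulVec : (lanczosMatrix d w n *ᵥ x) a =
      ‖gramSchmidt ℝ (krylov (toEuclideanLin (diagonal d)) (WithLp.toLp 2 w)) a‖⁻¹ *
        ⟪WithLp.toLp 2 x,
          gramSchmidt ℝ (krylov (toEuclideanLin (diagonal d)) (WithLp.toLp 2 w)) a⟫_ℝ := by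
    simp [mulVec, lanczosMatrix, gramSchmidtNormed, dotProduct, PiLp.inner_apply, Finset.mul_sum,
      mul_assoc]
  rw [hmulVec]
  exact mul_ne_zero (inv_ne_zero (norm_ne_zero_iff.2 hne)) hx

theorem exists_orthogonal_inS_pathGraph {κ : Type*} [Finite κ] (hn : Fintype.card ι = n)
    (hd : Function.Injective d) {x : κ → ι → ℝ} (hx : ∀ j, x j ≠ 0) :
    ∃ Q : Matrix (Fin n) ι ℝ, Q * Qᵀ = 1 ∧
      inS (SimpleGraph.pathGraph n) (Q * diagonal d * Qᵀ) ∧ ∀ a j, (Q *ᵥ x j) a ≠ 0 := by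
  obtain ⟨w, hw⟩ := exists_forall_krylovDet_ne_zero hd
    (x := Sum.elim x fun l => Pi.single l 1) (by rintro (j | l) <;> simp [hx])
  have hmulVec (a : Fin n) (j) := lanczosMatrix_mulVec_ne_zero (hw a (hn ▸ a.2) j)
  have hrow (a : Fin n) : (lanczosMatrix d w n).row a ≠ 0 := fun h => by
    obtain ⟨l⟩ : Nonempty ι := Fintype.card_pos_iff.1 (hn ▸ a.pos)
    exact hmulVec a (.inr l) (by simpa using congrFun h l)
  exact ⟨lanczosMatrix d w n, lanczosMatrix_mul_transpose hrow,
    inS_pathGraph_lanczosMatrix_mul_diagonal_mul_transpose hrow,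
    fun a j => hmulVec a (.inl j)⟩

end DiagonalLanczos

section Dilation

/-- The Halmos dilation of the diagonal matrix with entries `e`, for defect operator `diagonal s`,
padded by further diagonal entries `g`: up to the order of the indices, the matrix
`[[-diag e, 0, diag s], [0, diag g, 0], [diag s, 0, diag e]]`. -/
def halmosDilation {β γ R : Type*} [DecidableEq β] [DecidableEq γ] [CommRing R] (e s : β → R)
    (g : γ → R) : Matrix ((β ⊕ γ) ⊕ β) ((β ⊕ γ) ⊕ β) R :=
  fromBlocks (diagonal (Sum.elim (-e) g)) (fromRows (diagonal s) 0)
    (fromRows (diagonal s) 0)ᵀ (diagonal e)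

theorem halmosDilation_mul_self {β γ R : Type*} [Fintype β] [DecidableEq β] [Fintype γ]
    [DecidableEq γ] [CommRing R] {e s : β → R} {g : γ → R} {r : R}
    (hes : ∀ i, e i ^ 2 + s i ^ 2 = r) (hg : ∀ k, g k ^ 2 = r) :
    halmosDilation e s g * halmosDilation e s g = r • 1 := by
  let X : Matrix (β ⊕ γ) β R := fromRows (diagonal s) 0
  have hdiag : diagonal (Sum.elim (-e) g) * diagonal (Sum.elim (-e) g) + X * Xᵀ = r • 1 := by
    have hXXt : X * Xᵀ = diagonal (Sum.elim (s ^ 2) 0) := by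
      ext (i | i) (j | j) <;>
        simp [X, transpose_fromRows, fromRows_mul, mul_fromCols, diagonal_apply, pow_two]
    rw [hXXt, diagonal_mul_diagonal, diagonal_add, smul_one_eq_diagonal]
    congr 1
    ext (i | k)
    · simpa [pow_two] using hes i
    · simpa [pow_two] using hg k
  have hlast : Xᵀ * X + diagonal e * diagonal e = r • 1 := by
    have hXtX : Xᵀ * X = diagonal (s ^ 2) := by
      simp [X, transpose_fromRows, fromCols_mul_fromRows, pow_two, Pi.mul_def]
    rw [hXtX, diagonal_mul_diagonal, diagonal_add, smul_one_eq_diagonal]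
    congr 1
    ext i
    simpa [pow_two, add_comm] using hes i
  have hoff : diagonal (Sum.elim (-e) g) * X + X * diagonal e = 0 := by
    ext (i | i) j
    · simp only [Matrix.add_apply, diagonal_mul, mul_diagonal, X, fromRows_apply_inl,
        diagonal_apply]
      split_ifs with h <;> simp [h, mul_comm]
    · simp [X]
  have hoff' : Xᵀ * diagonal (Sum.elim (-e) g) + diagonal e * Xᵀ = 0 := by
    simpa using congrArg transpose hoff
  calc halmosDilation e s g * halmosDilation e s g = fromBlocks (r • 1) 0 0 (r • 1) := by
        rw [halmosDilation, fromBlocks_multiply, hdiag, hoff, hlast, hoff']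
    _ = r • 1 := by simp [← fromBlocks_one, fromBlocks_smul]

theorem conj_mul_conj_eq_smul_one {m n R : Type*} [Fintype m] [DecidableEq m] [Fintype n]
    [DecidableEq n] [CommRing R] {W : Matrix m n R} {M : Matrix n n R} {c : R}
    (hW : W * Wᵀ = 1) (hcard : Fintype.card n = Fintype.card m) (hM : M * M = c • 1) :
    W * M * Wᵀ * (W * M * Wᵀ) = c • 1 := by
  have hW' : Wᵀ * W = 1 := (mul_eq_one_comm_of_card_eq _ _ _ hcard.symm).1 hW
  calc W * M * Wᵀ * (W * M * Wᵀ) = W * (M * (Wᵀ * W) * M) * Wᵀ := by simp only [Matrix.mul_assoc]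
    _ = c • 1 := by simp [hW', hM, hW]

theorem fromBlocks_diag_conj {m n p q R : Type*} [Fintype n] [Fintype q] [CommRing R]
    (Q : Matrix m n R) (V : Matrix p q R) (D : Matrix n n R) (X : Matrix n q R)
    (E : Matrix q q R) :
    fromBlocks Q 0 0 V * fromBlocks D X Xᵀ E * (fromBlocks Q 0 0 V)ᵀ =
      fromBlocks (Q * D * Qᵀ) (Q * X * Vᵀ) (Q * X * Vᵀ)ᵀ (V * E * Vᵀ) := by
  simp [fromBlocks_transpose, fromBlocks_multiply, Matrix.mul_assoc]

theorem exists_orthogonal_inS_diagonal_injective {β : Type*} [Fintype β] [DecidableEq β]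
    (H : SimpleGraph β) : ∃ (V : Matrix β β ℝ) (e : β → ℝ), V * Vᵀ = 1 ∧
      Function.Injective e ∧ inS H (V * diagonal e * Vᵀ) := by
  obtain ⟨C, hC, hsep⟩ := exists_inS_charpoly_separable H
  have hC' : C.IsHermitian := isHermitian_iff_isSymm.2 hC.1
  refine ⟨hC'.eigenvectorUnitary, hC'.eigenvalues, ?_,
    eigenvalues_injective_of_charpoly_separable hC' hsep, ?_⟩
  · simpa only [star_eq_conjTranspose, conjTranspose_eq_transpose_of_trivial]
      using Unitary.mul_star_self_of_mem hC'.eigenvectorUnitary.2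
  · convert hC
    simpa [star_eq_conjTranspose, conjTranspose_eq_transpose_of_trivial]
      using hC'.spectral_theorem.symm

end Dilation

section Realisation

theorem exists_sq_add_sq_eq_sq {β : Type*} [Finite β] (e : β → ℝ) :
    ∃ (R : ℝ) (s : β → ℝ), R ≠ 0 ∧ (∀ i, s i ≠ 0) ∧ ∀ i, e i ^ 2 + s i ^ 2 = R ^ 2 := by
  obtain ⟨M, hM⟩ := Finite.exists_le fun i => |e i|
  have hlt (i : β) : e i ^ 2 < (|M| + 1) ^ 2 :=
    sq_lt_sq.2 (by rw [abs_of_pos (by positivity : 0 < |M| + 1)]; linarith [hM i, le_abs_self M])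
  refine ⟨|M| + 1, fun i => √((|M| + 1) ^ 2 - e i ^ 2), by positivity,
    fun i => (Real.sqrt_pos.2 (sub_pos.2 (hlt i))).ne', fun i => ?_⟩
  rw [Real.sq_sqrt (sub_pos.2 (hlt i)).le]
  ring

theorem exists_injective_sq_eq_sq {k : ℕ} (hk : k ≤ 2) {R : ℝ} (hR : R ≠ 0) :
    ∃ g : Fin k → ℝ, Function.Injective g ∧ ∀ i, g i ^ 2 = R ^ 2 := by
  have hinj : Function.Injective ![R, -R] := by
    intro i j h
    fin_cases i <;> fin_cases j <;> simp [hR, neg_eq_self, self_eq_neg] at h ⊢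
  refine ⟨![R, -R] ∘ Fin.castLE hk, hinj.comp (Fin.castLE_injective hk), fun i => ?_⟩
  have (j : Fin 2) : ![R, -R] j ^ 2 = R ^ 2 := by fin_cases j <;> simp
  exact this _

theorem injective_sumElim_neg_of_sq_add_sq_eq {β γ R : Type*} [CommRing R] [IsReduced R]
    {e s : β → R} {g : γ → R} {r : R} (he : Function.Injective e) (hg : Function.Injective g)
    (hs : ∀ i, s i ≠ 0) (hes : ∀ i, e i ^ 2 + s i ^ 2 = r) (hgr : ∀ k, g k ^ 2 = r) :
    Function.Injective (Sum.elim (-e) g) :=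
  (neg_injective.comp he).sumElim hg fun i k (h : -e i = g k) => hs i <| by
    have hsq : s i ^ 2 = 0 := by linear_combination hes i - hgr k + (e i - g k) * h
    exact eq_zero_of_pow_eq_zero hsq

theorem row_ne_zero_of_mul_transpose_eq_one {β γ R : Type*} [Fintype γ] [DecidableEq β]
    [Semiring R] [Nontrivial R] {V : Matrix β γ R} (hV : V * Vᵀ = 1) (i : β) : V i ≠ 0 := by
  intro h
  simpa [mul_apply, h] using congrFun₂ hV i i

theorem exists_orthogonal_inS_graphJoin_pathGraph {β γ : Type*} [Fintype β] [DecidableEq β]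
    [Fintype γ] [DecidableEq γ] {n : ℕ} {H : SimpleGraph β} {V : Matrix β β ℝ} {e s : β → ℝ}
    {g : γ → ℝ} (hn : Fintype.card (β ⊕ γ) = n) (hV : V * Vᵀ = 1)
    (hH : inS H (V * diagonal e * Vᵀ)) (hs : ∀ i, s i ≠ 0)
    (hd : Function.Injective (Sum.elim (-e) g)) :
    ∃ W : Matrix (Fin n ⊕ β) ((β ⊕ γ) ⊕ β) ℝ, W * Wᵀ = 1 ∧
      inS (graphJoin (SimpleGraph.pathGraph n) H) (W * halmosDilation e s g * Wᵀ) := by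
  let X : Matrix (β ⊕ γ) β ℝ := fromRows (diagonal s) 0
  have hX (j : β) : (X * Vᵀ).col j ≠ 0 := fun h => by
    refine row_ne_zero_of_mul_transpose_eq_one hV j (funext fun i => ?_)
    simpa [X, col, fromRows_mul, hs] using congrFun h (.inl i)
  obtain ⟨Q, hQ, hpath, hQX⟩ := exists_orthogonal_inS_pathGraph hn hd hX
  refine ⟨fromBlocks Q 0 0 V, ?_, ?_⟩
  · simp [fromBlocks_transpose, fromBlocks_multiply, hQ, hV]
  · rw [halmosDilation, fromBlocks_diag_conj]
    refine inS_graphJoin_fromBlocks hpath (fun a j => ?_) hH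
    rw [Matrix.mul_assoc]
    exact hQX a j

theorem qGraph_graphJoin_pathGraph_eq_two {β : Type*} [Fintype β] [DecidableEq β] [Nonempty β]
    {n : ℕ} (H : SimpleGraph β) (hle : Fintype.card β ≤ n) (hge : n ≤ Fintype.card β + 2) :
    qGraph (graphJoin (SimpleGraph.pathGraph n) H) = 2 := by
  obtain ⟨V, e, hV, he, hH⟩ := exists_orthogonal_inS_diagonal_injective H
  obtain ⟨R, s, hR, hs, hes⟩ := exists_sq_add_sq_eq_sq e
  obtain ⟨g, hg, hgR⟩ :=
    exists_injective_sq_eq_sq (show n - Fintype.card β ≤ 2 by lia) hR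
  have hcard : Fintype.card (β ⊕ Fin (n - Fintype.card β)) = n := by simp [hle]
  obtain ⟨W, hW, hA⟩ := exists_orthogonal_inS_graphJoin_pathGraph hcard hV hH hs
    (injective_sumElim_neg_of_sq_add_sq_eq he hg hs hes hgR)
  have hsq := conj_mul_conj_eq_smul_one hW
    (by rw [Fintype.card_sum, hcard, Fintype.card_sum, Fintype.card_fin])
    (halmosDilation_mul_self hes hgR)
  obtain ⟨b⟩ := ‹Nonempty β›
  have hn : 0 < n := (Fintype.card_pos_iff.2 ⟨b⟩).trans_le hle
  exact qGraph_eq_two_of_mul_self_eq hA hsq (graphJoin_adj_inl_inr ⟨0, hn⟩ b)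

end Realisation

theorem statement10_general {β : Type*} [Fintype β] [DecidableEq β] [Nonempty β] (n : ℕ)
    (H : SimpleGraph β) (hn : Fintype.card β ≤ n) :
    qGraph (graphJoin (SimpleGraph.pathGraph n) H) = 2 ↔ n ≤ Fintype.card β + 2 := by
  refine ⟨fun hq => ?_, qGraph_graphJoin_pathGraph_eq_two H hn⟩
  have h := two_mul_le_card_add_two_of_qGraph_eq_two (graphJoinInl _ H) hq
  rw [Fintype.card_sum, Fintype.card_fin] at h
  lia

/-- Example 3.5: for a connected graph `H` with `|H| ≤ n`,
`q(P_n ∨ H) = 2` iff `|H| ≥ n − 2`. -/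
theorem statement10 (n h : ℕ) (hn : 1 ≤ n)
    (H : SimpleGraph (Fin h)) (hH : H.Connected) (hhn : h ≤ n) :
    qGraph (graphJoin (SimpleGraph.pathGraph n) H) = 2 ↔ n ≤ h + 2 := by
  have := hH.nonempty
  simpa using statement10_general n H (by simpa using hhn)
end

section
/- Let m ≥ 2. For any distinct real numbers λ₁ < λ₂ < … < λ_m there exist real numbers μ_i ∈ (λ_i, λ_{i+1}) for i ∈ {1,…,m−1} and a matrix N ∈ S(K₁ ∨ C_{4m−2}) with spectrum {λ₁^(3), μ₁, λ₂^(3), μ₂, …, μ_{m−1}, λ_m^(3)} (so N realises the ordered multiplicity list (3,1,3,1,…,3)). Moreover, q(K₁ ∨ C_{4m−2}) = 2m − 1. -/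
open Matrix Filter

/-!
Border a symmetric matrix `B` by a hub vector `u = ∑ j, √(W j) • e j`, where `e j` is a unit
eigenvector of `B` for `μ j`. A number `x` outside the `μ j` acquires an eigenvector with hub entry
`1` when the secular equation `x - a = ∑ j, W j / (x - μ j)` holds, and reading `a` and `W` off the
partial fractions of `∏ i, (x - λ i) / ∏ j, (x - μ j)` makes every `λ i` a solution; `W j > 0`
because `λ` and `μ` interlace. If `B` is carried by the cycle and every `λ i` and `μ j` is a double
eigenvalue of `B`, then in the bordered matrix each `λ i` becomes triple and each `μ j` simple. Two
adjacent entries determine an eigenvector on a cycle, so rotating the eigenvectors inside one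
eigenplane makes `u` nowhere zero.

A cycle matrix with prescribed double eigenvalues comes from the same secular equation over `ℂ`:
border a Jacobi matrix by a vector supported on the two ends of the path, real at one end and
imaginary at the other. Each eigenvalue of this Hermitian matrix is doubled in its real form, whose
graph is a cycle made of two copies of the bordered path. To get the weights of the secular
equation right, the eigenvectors of the Jacobi matrix should have end entries of equal modulus; the
Lanczos process delivers this once its eigenvalues are chosen between the prescribed ones `d i` at a
common level of `|∏ i, (x - d i)|`.

For the lower bound, an eigenvector of a wheel matrix is determined by its entries at the hub and
at two adjacent rim vertices, so multiplicities are at most three. At a triple eigenvalue a certain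
principal minor of the shifted matrix has a value independent of the eigenvalue, while its sign is
the parity of the number of smaller eigenvalues. Hence that number has the same parity at all triple
eigenvalues, which forces the multiplicities to average about two.
-/

section SymmetricMatrix

theorem isHermitian_of_isSymm {V : Type*} {A : Matrix V V ℝ} (hA : A.IsSymm) :
    A.IsHermitian := by
  rwa [IsHermitian, conjTranspose_eq_transpose_of_trivial]

variable {V ι : Type*} [Fintype V] [Fintype ι]

theorem dotProduct_eq_zero_of_mulVec_eq_smul {A : Matrix V V ℝ} (hA : A.IsSymm) {x y : V → ℝ}
    {α β : ℝ} (hx : A *ᵥ x = α • x) (hy : A *ᵥ y = β • y) (hαβ : α ≠ β) : x ⬝ᵥ y = 0 := by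
  have self_adjoint : x ⬝ᵥ (A *ᵥ y) = (A *ᵥ x) ⬝ᵥ y := by
    rw [dotProduct_mulVec, ← mulVec_transpose, hA.eq]
  rw [hx, hy, dotProduct_smul, smul_dotProduct, smul_eq_mul, smul_eq_mul, mul_eq_mul_right_iff]
    at self_adjoint
  exact self_adjoint.resolve_left hαβ.symm

variable [DecidableEq V]

theorem card_roots_charpoly_of_isSymm {A : Matrix V V ℝ} (hA : A.IsSymm) :
    A.charpoly.roots.card = Fintype.card V := by
  rw [(isHermitian_of_isSymm hA).roots_charpoly_eq_eigenvalues, Multiset.card_map]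
  rfl

theorem isSymm_sub_scalar {A : Matrix V V ℝ} (hA : A.IsSymm) (ν : ℝ) :
    (A - scalar V ν).IsSymm := by
  rw [IsSymm, transpose_sub, hA.eq, scalar_apply, diagonal_transpose]

theorem roots_charpoly_sub_scalar (A : Matrix V V ℝ) (ν : ℝ) :
    (A - scalar V ν).charpoly.roots = A.charpoly.roots.map (· - ν) := by
  rw [charpoly_sub_scalar]
  simpa using A.charpoly.roots_comp_C_mul_X_add_C 1 ν isUnit_one

theorem rank_sub_scalar_add_count_roots {A : Matrix V V ℝ} (hA : A.IsSymm) (ν : ℝ) :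
    (A - scalar V ν).rank + A.charpoly.roots.count ν = Fintype.card V := by
  have hM := isHermitian_of_isSymm (isSymm_sub_scalar hA ν)
  have count_shift : A.charpoly.roots.count ν = (A - scalar V ν).charpoly.roots.count 0 := by
    rw [roots_charpoly_sub_scalar, ← sub_self ν,
      Multiset.count_map_eq_count' _ _ (sub_left_injective)]
  have count_zero : (A - scalar V ν).charpoly.roots.count 0 =
      (Finset.univ.filter fun i => ¬ hM.eigenvalues i ≠ 0).card := by
    rw [hM.roots_charpoly_eq_eigenvalues, Multiset.count_map]
    simp only [eq_comm (a := (0 : ℝ)), not_not]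
    rfl
  rw [count_shift, count_zero, hM.rank_eq_card_non_zero_eigs, Fintype.card_subtype,
    Finset.card_filter_add_card_filter_not, Finset.card_univ]

theorem finrank_eigenspace_eq_count_roots {A : Matrix V V ℝ} (hA : A.IsSymm) (ν : ℝ) :
    Module.finrank ℝ (Module.End.eigenspace (toLin' A) ν) = A.charpoly.roots.count ν := by
  have hker : Module.End.eigenspace (toLin' A) ν = LinearMap.ker (A - scalar V ν).mulVecLin := by
    ext x
    simp [sub_eq_zero]
  have rank_nullity := LinearMap.finrank_range_add_finrank_ker (A - scalar V ν).mulVecLin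
  rw [Module.finrank_fintype_fun_eq_card, ← rank_sub_scalar_add_count_roots hA ν] at rank_nullity
  rw [hker]
  exact Nat.add_left_cancel rank_nullity

theorem card_le_count_roots_of_linearIndependent {A : Matrix V V ℝ} (hA : A.IsSymm) {ν : ℝ}
    {w : ι → V → ℝ} (hw : LinearIndependent ℝ w) (hAw : ∀ i, A *ᵥ w i = ν • w i) :
    Fintype.card ι ≤ A.charpoly.roots.count ν := by
  rw [← finrank_eigenspace_eq_count_roots hA, ← finrank_span_eq_card hw]
  refine Submodule.finrank_mono (Submodule.span_le.mpr ?_)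
  rintro _ ⟨i, rfl⟩
  exact Module.End.mem_eigenspace_iff.mpr (hAw i)

theorem exists_mulVec_eq_smul_of_card_lt_count_roots {A : Matrix V V ℝ} (hA : A.IsSymm) {ν : ℝ}
    (f : ι → V) (hcount : Fintype.card ι < A.charpoly.roots.count ν) :
    ∃ x ≠ 0, A *ᵥ x = ν • x ∧ ∀ i, x (f i) = 0 := by
  rw [← finrank_eigenspace_eq_count_roots hA, ← Module.finrank_fintype_fun_eq_card ℝ] at hcount
  obtain ⟨⟨x, hx⟩, hxf, hx0⟩ := ((LinearMap.funLeft ℝ ℝ f).domRestrict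
    (Module.End.eigenspace (toLin' A) ν)).ker.ne_bot_iff.mp
      (LinearMap.ker_ne_bot_of_finrank_lt hcount)
  exact ⟨x, fun h => hx0 (Subtype.ext h), Module.End.mem_eigenspace_iff.mp hx, congrFun hxf⟩

variable [DecidableEq ι]

theorem eq_submatrix_mul_inv_mul_submatrix_of_rank_le {K m n : Type*} [Field K] [Fintype n]
    (M : Matrix m n K) (f : ι → m) (g : ι → n)
    (hdet : (M.submatrix f g).det ≠ 0) (hrank : M.rank ≤ Fintype.card ι) :
    M = M.submatrix id g * ((M.submatrix f g)⁻¹ * M.submatrix f id) := by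
  classical
  set Q := M.submatrix f g
  set R := M.submatrix f id
  set E : Matrix n ι K := (1 : Matrix n n K).submatrix id g
  have hu : IsUnit Q.det := isUnit_iff_ne_zero.mpr hdet
  have hRE : R * E = Q := by
    simpa using submatrix_mul_equiv M (1 : Matrix n n K) f (Equiv.refl n) g
  have hME : M * E = M.submatrix id g := by
    simpa using submatrix_mul_equiv M (1 : Matrix n n K) id (Equiv.refl n) g
  have hker_le : LinearMap.ker M.mulVecLin ≤ LinearMap.ker R.mulVecLin := fun x hx =>
    funext fun i => congrFun hx (f i)
  have hR : Function.Surjective R.mulVecLin := fun z =>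
    ⟨(E * Q⁻¹) *ᵥ z, by
      rw [mulVecLin_apply, mulVec_mulVec, ← Matrix.mul_assoc, hRE, mul_nonsing_inv _ hu,
        one_mulVec]⟩
  have hker : LinearMap.ker M.mulVecLin = LinearMap.ker R.mulVecLin := by
    have hnM : M.rank + _ = _ := LinearMap.finrank_range_add_finrank_ker M.mulVecLin
    have hnR := LinearMap.finrank_range_add_finrank_ker R.mulVecLin
    rw [LinearMap.range_eq_top.mpr hR, finrank_top, Module.finrank_fintype_fun_eq_card] at hnR
    exact Submodule.eq_of_le_of_finrank_le hker_le (by omega)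
  have hRproj : R * (1 - E * (Q⁻¹ * R)) = 0 := by
    rw [Matrix.mul_sub, Matrix.mul_one, ← Matrix.mul_assoc, hRE, mul_nonsing_inv_cancel_left _ _ hu,
      sub_self]
  have hMproj : M * (1 - E * (Q⁻¹ * R)) = 0 := by
    refine ext_of_mulVec_single fun i => ?_
    rw [← mulVec_mulVec, zero_mulVec, ← mulVecLin_apply, ← LinearMap.mem_ker, hker,
      LinearMap.mem_ker, mulVecLin_apply, mulVec_mulVec, hRproj, zero_mulVec]
  rwa [Matrix.mul_sub, Matrix.mul_one, ← Matrix.mul_assoc, hME, sub_eq_zero] at hMproj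

theorem det_submatrix_mul_prod_roots_pos {M : Matrix V V ℝ} (hM : M.IsSymm) {f : ι → V}
    (hdet : (M.submatrix f f).det ≠ 0) (hrank : M.rank ≤ Fintype.card ι) :
    0 < (M.submatrix f f).det * (M.charpoly.roots.filter (· ≠ 0)).prod := by
  set Q := M.submatrix f f
  set R := M.submatrix f id
  have hRT : M.submatrix id f = Rᵀ := by rw [transpose_submatrix, hM.eq]
  have hfac : M = Rᵀ * (Q⁻¹ * R) :=
    hRT ▸ eq_submatrix_mul_inv_mul_submatrix_of_rank_le M f f hdet hrank
  have hgram : 0 < (R * Rᵀ).det := by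
    have hR : Function.Injective R.vecMul := fun z w hzw =>
      vecMul_injective_of_isUnit ((isUnit_iff_isUnit_det Q).mpr (isUnit_iff_ne_zero.mpr hdet))
        (funext fun i => congrFun hzw (f i))
    simpa using (PosDef.mul_conjTranspose_self R hR).det_pos
  set G := Q⁻¹ * R * Rᵀ with hGdef
  have hG : Q.det * G.det = (R * Rᵀ).det := by
    rw [hGdef, Matrix.mul_assoc, ← det_mul,
      mul_nonsing_inv_cancel_left _ _ (isUnit_iff_ne_zero.mpr hdet)]
  have hcard : Fintype.card ι ≤ Fintype.card V := by
    refine Fintype.card_le_of_injective f fun i j hij => ?_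
    by_contra hne
    exact hdet (det_zero_of_row_eq hne (congrArg (fun v => M v ∘ f) hij))
  have hchar : M.charpoly = Polynomial.X ^ (Fintype.card V - Fintype.card ι) * G.charpoly := by
    rw [← charpoly_mul_comm_of_le _ _ hcard, ← hfac]
  have hsplit : G.charpoly.Splits :=
    (isHermitian_of_isSymm hM).splits_charpoly.of_dvd (charpoly_monic M).ne_zero
      (hchar ▸ dvd_mul_left _ _)
  have hGdet : G.det ≠ 0 := right_ne_zero_of_mul (hG.trans_ne hgram.ne')
  have hroots : M.charpoly.roots.filter (· ≠ 0) = G.charpoly.roots := by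
    have h0 : ∀ r ∈ G.charpoly.roots, r ≠ 0 := by
      rintro _ hr rfl
      refine hGdet ?_
      rw [det_eq_prod_roots_charpoly_of_splits hsplit]
      exact Multiset.prod_eq_zero hr
    rw [hchar, Polynomial.roots_mul (hchar ▸ (charpoly_monic M).ne_zero), Polynomial.roots_X_pow,
      Multiset.filter_add, Multiset.filter_eq_self.mpr h0,
      Multiset.filter_eq_nil.mpr fun r hr => not_not.mpr ?_, zero_add]
    exact Multiset.mem_singleton.mp (Multiset.mem_of_mem_nsmul hr)
  rwa [hroots, ← det_eq_prod_roots_charpoly_of_splits hsplit, hG]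

theorem neg_one_pow_card_filter_neg_mul_prod_pos (s : Multiset ℝ) :
    0 < (-1) ^ (s.filter (· < 0)).card * (s.filter (· ≠ 0)).prod := by
  induction s using Multiset.induction_on with
  | empty => simp
  | cons a s ih =>
    rcases lt_trichotomy a 0 with ha | rfl | ha
    · rw [Multiset.filter_cons_of_pos (p := (· < 0)) _ ha,
        Multiset.filter_cons_of_pos (p := (· ≠ 0)) _ ha.ne,
        Multiset.card_cons, Multiset.prod_cons, pow_succ]
      nlinarith
    · simpa using ih
    · rw [Multiset.filter_cons_of_neg (p := (· < 0)) _ ha.not_gt,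
        Multiset.filter_cons_of_pos (p := (· ≠ 0)) _ ha.ne',
        Multiset.prod_cons]
      nlinarith

theorem neg_one_pow_card_roots_lt_mul_det_pos {A : Matrix V V ℝ} (hA : A.IsSymm) {ν : ℝ}
    {f : ι → V} (hdet : ((A - scalar V ν).submatrix f f).det ≠ 0)
    (hcount : Fintype.card V ≤ Fintype.card ι + A.charpoly.roots.count ν) :
    0 < (-1) ^ (A.charpoly.roots.filter (· < ν)).card *
      ((A - scalar V ν).submatrix f f).det := by
  have hdetprod := det_submatrix_mul_prod_roots_pos (isSymm_sub_scalar hA ν) hdet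
    (by have := rank_sub_scalar_add_count_roots hA ν; omega)
  have hsign := neg_one_pow_card_filter_neg_mul_prod_pos (A - scalar V ν).charpoly.roots
  have hcard : ((A - scalar V ν).charpoly.roots.filter (· < 0)).card =
      (A.charpoly.roots.filter (· < ν)).card := by
    rw [roots_charpoly_sub_scalar, Multiset.filter_map, Multiset.card_map]
    simp only [Function.comp_def, sub_neg]
  rw [hcard] at hsign
  refine pos_of_mul_pos_left (b := ((A - scalar V ν).charpoly.roots.filter (· ≠ 0)).prod ^ 2) ?_
    (sq_nonneg _)
  nlinarith [mul_pos hsign hdetprod]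

end SymmetricMatrix

section Border

/-- The matrix `J` bordered by a row `w`, a column `u` and the corner entry `a`; the new index
comes first, as the hub `K₁` does in the join `K₁ ∨ G`. -/
def border {K V : Type*} (a : K) (w u : V → K) (J : Matrix V V K) :
    Matrix (Fin 1 ⊕ V) (Fin 1 ⊕ V) K :=
  fromBlocks (of fun _ _ => a) (replicateRow (Fin 1) w) (replicateCol (Fin 1) u) J

theorem isSymm_border {K V : Type*} (a : K) (u : V → K) {J : Matrix V V K} (hJ : J.IsSymm) :
    (border a u u J).IsSymm :=
  IsSymm.fromBlocks rfl rfl hJ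

theorem border_mulVec {K V : Type*} [CommRing K] [Fintype V] (a h : K) (w u x : V → K)
    (J : Matrix V V K) :
    border a w u J *ᵥ Sum.elim (fun _ => h) x =
      Sum.elim (fun _ => a * h + w ⬝ᵥ x) (h • u + J *ᵥ x) := by
  rw [border, fromBlocks_mulVec]
  ext (_ | v) <;> simp [mulVec, dotProduct, mul_comm]

/-- The last hypothesis is the secular equation `x - a = ∑ j, W j / (x - g j)`. -/
theorem border_mulVec_eq_smul_of_secular {K V ι : Type*} [Field K] [Fintype V] [Fintype ι]
    {a x : K} {w u : V → K} {J : Matrix V V K} {g W : ι → K} {U : ι → V → K}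
    (hJ : ∀ j, J *ᵥ U j = g j • U j) (hw : ∀ j, w ⬝ᵥ U j = W j) (hu : u = ∑ j, U j)
    (hg : ∀ j, x ≠ g j) (hx : x - a = ∑ j, W j / (x - g j)) :
    border a w u J *ᵥ Sum.elim (fun _ => 1) (∑ j, (x - g j)⁻¹ • U j) =
      x • Sum.elim (fun _ => 1) (∑ j, (x - g j)⁻¹ • U j) := by
  have hub : a * 1 + w ⬝ᵥ ∑ j, (x - g j)⁻¹ • U j = x * 1 := by
    have : ∑ j, W j / (x - g j) = w ⬝ᵥ ∑ j, (x - g j)⁻¹ • U j := by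
      rw [dotProduct_sum]
      exact Finset.sum_congr rfl fun j _ => by
        rw [dotProduct_smul, hw, smul_eq_mul, div_eq_inv_mul]
    rw [← this, ← hx]
    ring
  have rim : (1 : K) • u + J *ᵥ ∑ j, (x - g j)⁻¹ • U j = x • ∑ j, (x - g j)⁻¹ • U j := by
    rw [one_smul, hu, mulVec_sum, ← Finset.sum_add_distrib, Finset.smul_sum]
    refine Finset.sum_congr rfl fun j _ => ?_
    have hxg : 1 + (x - g j)⁻¹ * g j = x * (x - g j)⁻¹ := by
      have := sub_ne_zero.mpr (hg j)
      field_simp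
      ring
    rw [mulVec_smul, hJ, smul_smul, smul_smul, ← hxg, add_smul, one_smul]
  rw [border_mulVec, hub, rim]
  ext (_ | v) <;> simp

theorem inS_graphJoin_top_iff {V : Type*} (G : SimpleGraph V)
    (A : Matrix (Fin 1 ⊕ V) (Fin 1 ⊕ V) ℝ) :
    inS (graphJoin (⊤ : SimpleGraph (Fin 1)) G) A ↔
      A.IsSymm ∧ inS G A.toBlocks₂₂ ∧ ∀ v, A (Sum.inl 0) (Sum.inr v) ≠ 0 := by
  constructor
  · rintro ⟨hA, hadj⟩
    refine ⟨hA, ⟨?_, fun i j hij => ?_⟩, fun v => ?_⟩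
    · ext i j
      exact hA.apply _ _
    · simpa [graphJoin, partialJoin, toBlocks₂₂] using
        hadj (Sum.inr i) (Sum.inr j) (Sum.inr_injective.ne hij)
    · simp [hadj _ _ Sum.inl_ne_inr, graphJoin, partialJoin]
  · rintro ⟨hA, hG, hhub⟩
    refine ⟨hA, ?_⟩
    rintro (i | i) (j | j) hij
    · exact absurd (congrArg Sum.inl (Subsingleton.elim i j)) hij
    · rw [Subsingleton.elim i 0]
      exact iff_of_true (hhub j) (by simp [graphJoin, partialJoin])
    · rw [Subsingleton.elim j 0, hA.apply]
      exact iff_of_true (hhub i) (by simp [graphJoin, partialJoin])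
    · simpa [graphJoin, partialJoin, toBlocks₂₂] using hG.2 i j (ne_of_apply_ne Sum.inr hij)

theorem inS_graphJoin_border {V : Type*} {G : SimpleGraph V} {J : Matrix V V ℝ} (hJ : inS G J)
    (a : ℝ) {u : V → ℝ} (hu : ∀ v, u v ≠ 0) :
    inS (graphJoin (⊤ : SimpleGraph (Fin 1)) G) (border a u u J) :=
  (inS_graphJoin_top_iff G _).mpr ⟨isSymm_border a u hJ.1, hJ, hu⟩

end Border

section Interlacing

open Polynomial

theorem exists_eval_eq_eval_nodal_mul {K ι : Type*} [Field K] [DecidableEq ι] {s : Finset ι}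
    {g : ι → K} (hg : Set.InjOn g s) {f : K[X]} (hf : f.Monic) (hdeg : f.natDegree = s.card + 1) :
    ∃ a, ∀ x, (∀ j ∈ s, x ≠ g j) → f.eval x = (Lagrange.nodal s g).eval x *
      (x - a + ∑ j ∈ s, f.eval (g j) * Lagrange.nodalWeight s g j / (x - g j)) := by
  set χ := Lagrange.nodal s g with hχ
  have hχm : χ.Monic := Lagrange.nodal_monic
  have hχdeg : χ.degree = s.card := Lagrange.degree_nodal
  have hquot : f /ₘ χ = X + C ((f /ₘ χ).coeff 0) := by
    refine Monic.eq_X_add_C ?_ ?_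
    · rw [Monic, leadingCoeff_divByMonic_of_monic hχm, hf]
      rw [hχdeg, degree_eq_natDegree hf.ne_zero, hdeg]
      exact_mod_cast Nat.le_succ _
    · rw [natDegree_divByMonic _ hχm, hdeg, hχ, Lagrange.natDegree_nodal, Nat.add_sub_cancel_left]
  have hrem : f %ₘ χ = Lagrange.interpolate s g fun j => f.eval (g j) := by
    refine Lagrange.eq_interpolate_of_eval_eq _ hg (hχdeg ▸ degree_modByMonic_lt f hχm)
      fun j hj => ?_
    conv_rhs => rw [← modByMonic_add_div f χ]
    rw [eval_add, eval_mul, hχ, Lagrange.eval_nodal_at_node hj, zero_mul, add_zero]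
  refine ⟨-(f /ₘ χ).coeff 0, fun x hx => ?_⟩
  conv_lhs => rw [← modByMonic_add_div f χ]
  rw [eval_add, eval_mul, hrem, Lagrange.eval_interpolate_not_at_node _ hx, hquot, ← mul_add,
    add_comm, eval_add, eval_X, eval_C, coeff_add, coeff_X_zero, coeff_C_zero, zero_add,
    sub_neg_eq_add]
  congr 2
  exact Finset.sum_congr rfl fun j _ => by rw [div_eq_mul_inv]; ring

theorem sum_pow_mul_nodalWeight_eq_zero {K ι : Type*} [Field K] [DecidableEq ι] {s : Finset ι}
    {g : ι → K} (hg : Set.InjOn g s) {k : ℕ} (hk : k + 1 < s.card) :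
    ∑ j ∈ s, g j ^ k * Lagrange.nodalWeight s g j = 0 := by
  have hcoeff := Lagrange.coeff_eq_sum hg (P := (X ^ k : K[X]))
    (by rw [degree_X_pow]; exact_mod_cast (Nat.lt_succ_self k).trans hk)
  rw [coeff_X_pow, if_neg (by omega)] at hcoeff
  rw [hcoeff]
  refine Finset.sum_congr rfl fun j _ => ?_
  rw [eval_pow, eval_X, Lagrange.nodalWeight, Finset.prod_inv_distrib, div_eq_mul_inv]

/-- `d 0 < g 0 < d 1 < g 1 < ⋯ < d n`, the strict interlacing pattern of the eigenvalues of a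
bordered symmetric matrix and of the matrix it borders. -/
def StrictlyInterlaces {n : ℕ} (g : Fin n → ℝ) (d : Fin (n + 1) → ℝ) : Prop :=
  ∀ i, d i.castSucc < g i ∧ g i < d i.succ

/-- The weights `W j` in the partial fraction expansion
`∏ l, (x - d l) / ∏ j, (x - g j) = x - a - ∑ j, W j / (x - g j)`. -/
noncomputable def secularWeight {n : ℕ} (d : Fin (n + 1) → ℝ) (g : Fin n → ℝ) (j : Fin n) : ℝ :=
  -(∏ l, (g j - d l)) * Lagrange.nodalWeight Finset.univ g j

namespace StrictlyInterlaces

variable {n : ℕ} {g : Fin n → ℝ} {d : Fin (n + 1) → ℝ}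

theorem strictMono_right (h : StrictlyInterlaces g d) : StrictMono d :=
  Fin.strictMono_iff_lt_succ.mpr fun i => (h i).1.trans (h i).2

theorem strictMono_left (h : StrictlyInterlaces g d) : StrictMono g := fun i j hij =>
  (h i).2.trans_le ((h.strictMono_right.monotone (Fin.succ_le_castSucc_iff.mpr hij)).trans
    (h j).1.le)

theorem ne (h : StrictlyInterlaces g d) (i : Fin (n + 1)) (j : Fin n) : d i ≠ g j := by
  rcases le_or_gt i j.castSucc with hij | hij
  · exact ((h.strictMono_right.monotone hij).trans_lt (h j).1).ne
  · exact ((h j).2.trans_le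
      (h.strictMono_right.monotone (Fin.castSucc_lt_iff_succ_le.mp hij))).ne'

theorem exists_secular (h : StrictlyInterlaces g d) :
    ∃ a, ∀ i, d i - a = ∑ j, secularWeight d g j / (d i - g j) := by
  obtain ⟨a, ha⟩ := exists_eval_eq_eval_nodal_mul (s := Finset.univ)
    h.strictMono_left.injective.injOn (monic_prod_X_sub_C d Finset.univ)
    (by simp [natDegree_prod_of_monic, monic_X_sub_C])
  refine ⟨a, fun i => ?_⟩
  have hroot := ha (d i) fun j _ => h.ne i j
  rw [eval_prod, Finset.prod_eq_zero (Finset.mem_univ i) (by simp), eq_comm, mul_eq_zero,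
    or_iff_right (Lagrange.eval_nodal_not_at_node fun j _ => h.ne i j)] at hroot
  rw [eq_neg_of_add_eq_zero_left hroot, ← Finset.sum_neg_distrib]
  refine Finset.sum_congr rfl fun j _ => ?_
  simp only [secularWeight, eval_prod, eval_sub, eval_X, eval_C]
  ring

theorem secularWeight_pos (h : StrictlyInterlaces g d) (j : Fin n) : 0 < secularWeight d g j := by
  have hd := h.strictMono_right
  have hfactor : secularWeight d g j = (g j - d j.castSucc) * (d j.succ - g j) *
      ∏ x ∈ Finset.univ.erase j, ((g j - d (j.castSucc.succAbove x)) * (g j - g x)⁻¹) := by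
    rw [secularWeight, Lagrange.nodalWeight, Fin.prod_univ_succAbove _ j.castSucc,
      ← Finset.mul_prod_erase Finset.univ _ (Finset.mem_univ j), Fin.succAbove_castSucc_self,
      Finset.prod_mul_distrib]
    ring
  rw [hfactor]
  refine mul_pos (mul_pos (sub_pos.mpr (h j).1) (sub_pos.mpr (h j).2))
    (Finset.prod_pos fun x hx => ?_)
  rcases lt_or_gt_of_ne (Finset.ne_of_mem_erase hx) with hxj | hjx
  · rw [Fin.succAbove_of_castSucc_lt _ _ (Fin.castSucc_lt_castSucc_iff.mpr hxj)]
    exact mul_pos (sub_pos.mpr ((hd (Fin.castSucc_lt_castSucc_iff.mpr hxj)).trans (h j).1))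
      (inv_pos.mpr (sub_pos.mpr (h.strictMono_left hxj)))
  · rw [Fin.succAbove_of_le_castSucc _ _ (Fin.castSucc_le_castSucc_iff.mpr hjx.le)]
    exact mul_pos_of_neg_of_neg (sub_neg.mpr ((h j).2.trans (hd (Fin.succ_lt_succ_iff.mpr hjx))))
      (inv_lt_zero.mpr (sub_neg.mpr (h.strictMono_left hjx)))

end StrictlyInterlaces

theorem strictlyInterlaces_midpoint {n : ℕ} {d : Fin (n + 1) → ℝ} (hd : StrictMono d) :
    StrictlyInterlaces (fun j => (d j.castSucc + d j.succ) / 2) d := fun _ =>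
  ⟨left_lt_add_div_two.mpr (hd Fin.castSucc_lt_succ),
    add_div_two_lt_right.mpr (hd Fin.castSucc_lt_succ)⟩

theorem exists_strictlyInterlaces_abs_prod_eq {n : ℕ} {d : Fin (n + 1) → ℝ} (hd : StrictMono d) :
    ∃ g : Fin n → ℝ, StrictlyInterlaces g d ∧ ∃ c > 0, ∀ j, |∏ l, (g j - d l)| = c := by
  let F : ℝ → ℝ := fun x => |∏ l, (x - d l)|
  let mid : Fin n → ℝ := fun j => (d j.castSucc + d j.succ) / 2
  have hmid : StrictlyInterlaces mid d := strictlyInterlaces_midpoint hd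
  have hF_mid : ∀ j, 0 < F (mid j) := fun j =>
    abs_pos.mpr (Finset.prod_ne_zero_iff.mpr fun l _ => sub_ne_zero.mpr (hmid.ne l j).symm)
  have hF_d : ∀ i, F (d i) = 0 := fun i =>
    abs_eq_zero.mpr (Finset.prod_eq_zero (Finset.mem_univ i) (sub_self _))
  obtain ⟨c, hc_lt, hc : 0 < c⟩ :=
    ((eventually_all.mpr fun j => Ioo_mem_nhdsGT (hF_mid j)).and self_mem_nhdsWithin).exists
  have hlevel : ∀ j : Fin n, ∃ x, (d j.castSucc < x ∧ x < d j.succ) ∧ F x = c := fun j => by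
    obtain ⟨x, hx, hFx⟩ := intermediate_value_Icc (hmid j).1.le
      (by fun_prop : ContinuousOn F _) ⟨(hF_d j.castSucc).trans_le hc.le, (hc_lt j).2.le⟩
    refine ⟨x, ⟨hx.1.lt_of_ne ?_, hx.2.trans_lt (hmid j).2⟩, hFx⟩
    rintro rfl
    exact hc.ne' (hFx.symm.trans (hF_d _))
  choose g hg hFg using hlevel
  exact ⟨g, hg, c, hc, hFg⟩

end Interlacing

section Lanczos

variable {E : Type*} [NormedAddCommGroup E] [InnerProductSpace ℝ E]

open Module InnerProductSpace
open scoped RealInnerProductSpace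

theorem eq_or_eq_neg_of_mem_span_singleton {x y : E} (hx : ‖x‖ = 1) (hy : ‖y‖ = 1)
    (h : x ∈ Submodule.span ℝ {y}) : x = y ∨ x = -y := by
  obtain ⟨c, rfl⟩ := Submodule.mem_span_singleton.mp h
  rw [norm_smul, hy, mul_one, Real.norm_eq_abs, abs_eq zero_le_one] at hx
  exact hx.imp (fun hc => by rw [hc, one_smul]) fun hc => by rw [hc, neg_smul, one_smul]

theorem inner_eq_zero_of_mem_span_image {ι : Type*} {e : ι → E} (he : Orthonormal ℝ e)
    {s : Set ι} {i : ι} (hi : i ∉ s) {x : E} (hx : x ∈ Submodule.span ℝ (e '' s)) :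
    ⟪e i, x⟫ = 0 := by
  rw [← Submodule.mem_orthogonal_singleton_iff_inner_right]
  refine Submodule.span_le.mpr ?_ hx
  rintro _ ⟨j, hj, rfl⟩
  exact Submodule.mem_orthogonal_singleton_iff_inner_right.mpr
    (he.2 fun hij => hi (hij ▸ hj))

theorem exists_orthonormalBasis_span_image_Iic_eq {ι : Type*} [LinearOrder ι]
    [LocallyFiniteOrderBot ι] [WellFoundedLT ι] [Fintype ι] [FiniteDimensional ℝ E] {f : ι → E}
    (hf : LinearIndependent ℝ f) (hdim : finrank ℝ E = Fintype.card ι) :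
    ∃ e : OrthonormalBasis ι ℝ E,
      ∀ k, Submodule.span ℝ (e '' Set.Iic k) = Submodule.span ℝ (f '' Set.Iic k) := by
  refine ⟨gramSchmidtOrthonormalBasis hdim f, fun k => ?_⟩
  have : ⇑(gramSchmidtOrthonormalBasis hdim f) = gramSchmidtNormed ℝ f := funext fun i =>
    gramSchmidtOrthonormalBasis_apply hdim (norm_ne_zero_iff.mp (by
      rw [gramSchmidtNormed_unit_length i hf]; exact one_ne_zero))
  rw [this, span_gramSchmidtNormed, span_gramSchmidt_Iic]

variable {n : ℕ} {T : E →ₗ[ℝ] E} {v : E} {e : OrthonormalBasis (Fin (n + 1)) ℝ E}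

theorem map_mem_span_krylov {k l : Fin (n + 1)} (hkl : (k : ℕ) + 1 ≤ l) {x : E}
    (hx : x ∈ Submodule.span ℝ ((fun i : Fin (n + 1) => (T ^ (i : ℕ)) v) '' Set.Iic k)) :
    T x ∈ Submodule.span ℝ ((fun i : Fin (n + 1) => (T ^ (i : ℕ)) v) '' Set.Iic l) := by
  rw [← Submodule.mem_comap]
  refine Submodule.span_le.mpr ?_ hx
  rintro _ ⟨i, hi, rfl⟩
  have hik : (i : ℕ) ≤ k := hi
  exact Submodule.subset_span ⟨⟨i + 1, by omega⟩, Fin.le_def.mpr (by simp only; omega),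
    by simp only [pow_succ', Module.End.mul_apply]⟩

variable
  (he : ∀ k, Submodule.span ℝ (e '' Set.Iic k) =
    Submodule.span ℝ ((fun i : Fin (n + 1) => (T ^ (i : ℕ)) v) '' Set.Iic k))
include he

theorem inner_map_krylovBasis_eq_zero {k l : Fin (n + 1)} (hkl : (k : ℕ) + 1 < l) :
    ⟪e l, T (e k)⟫ = 0 := by
  set m : Fin (n + 1) := ⟨k + 1, by omega⟩
  refine inner_eq_zero_of_mem_span_image (s := Set.Iic m) e.orthonormal
    (fun hlm => hkl.not_ge hlm) ?_
  rw [he]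
  refine map_mem_span_krylov le_rfl ?_
  rw [← he]
  exact Submodule.subset_span ⟨k, Set.self_mem_Iic, rfl⟩

theorem inner_map_krylovBasis_ne_zero {k l : Fin (n + 1)} (hkl : (k : ℕ) + 1 = l) :
    ⟪e l, T (e k)⟫ ≠ 0 := by
  intro hzero
  have hmap : ∀ x ∈ Submodule.span ℝ (e '' Set.Iic k), ⟪e l, T x⟫ = 0 := by
    intro x hx
    refine Submodule.span_le (p := LinearMap.ker ((innerₛₗ ℝ (e l)).comp T)) |>.mpr ?_ hx
    rintro _ ⟨i, hi, rfl⟩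
    rcases (show i ≤ k from hi).lt_or_eq with hik | rfl
    · exact inner_map_krylovBasis_eq_zero he (by rw [← hkl]; exact Nat.succ_lt_succ hik)
    · exact hzero
  have hkrylov : Submodule.span ℝ ((fun i : Fin (n + 1) => (T ^ (i : ℕ)) v) '' Set.Iic l) ≤
      LinearMap.ker (innerₛₗ ℝ (e l)) := by
    refine Submodule.span_le.mpr ?_
    rintro _ ⟨i, hi, rfl⟩
    have hspan : ∀ j ≤ k, (T ^ (j : ℕ)) v ∈ Submodule.span ℝ (e '' Set.Iic k) := fun j hj =>
      (he k).ge (Submodule.subset_span ⟨j, hj, rfl⟩)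
    rcases Nat.lt_or_ge k i with hki | hik
    · have hik : (i : ℕ) = k + 1 := le_antisymm (hkl ▸ hi) hki
      simp only [hik, pow_succ', Module.End.mul_apply]
      exact hmap _ (hspan k le_rfl)
    · exact inner_eq_zero_of_mem_span_image e.orthonormal
        (fun hlk : l ≤ k => absurd (Fin.le_def.mp hlk) (by omega)) (hspan i hik)
  have hself : ⟪e l, e l⟫ = 0 :=
    hkrylov ((he l).le (Submodule.subset_span ⟨l, Set.self_mem_Iic, rfl⟩))
  exact e.orthonormal.ne_zero l (inner_self_eq_zero.mp hself)

theorem inS_pathGraph_of_krylovBasis (hT : T.IsSymmetric) :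
    inS (SimpleGraph.pathGraph (n + 1)) (of fun k l => ⟪e k, T (e l)⟫) := by
  have hsymm : ∀ k l, ⟪e k, T (e l)⟫ = ⟪e l, T (e k)⟫ := fun k l => by
    rw [← hT, real_inner_comm]
  refine ⟨ext fun k l => hsymm l k, fun k l hkl => ?_⟩
  rw [SimpleGraph.pathGraph_adj, of_apply]
  rcases lt_trichotomy ((k : ℕ) + 1) l with h | h | h
  · exact iff_of_false (not_not.mpr (hsymm k l ▸ inner_map_krylovBasis_eq_zero he h)) (by omega)
  · exact iff_of_true (hsymm k l ▸ inner_map_krylovBasis_ne_zero he h) (Or.inl h)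
  rcases lt_or_eq_of_le (show (l : ℕ) + 1 ≤ k by omega) with h' | h'
  · exact iff_of_false (not_not.mpr (inner_map_krylovBasis_eq_zero he h')) (by omega)
  · exact iff_of_true (inner_map_krylovBasis_ne_zero he h') (Or.inr h')

theorem krylovBasis_zero (hv : ‖v‖ = 1) : e 0 = v ∨ e 0 = -v := by
  have hIic : Set.Iic (0 : Fin (n + 1)) = {0} := Set.Iic_bot
  have hspan := he 0
  rw [hIic, Set.image_singleton, Set.image_singleton] at hspan
  exact eq_or_eq_neg_of_mem_span_singleton (e.norm_eq_one 0) hv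
    (by simpa using hspan ▸ Submodule.mem_span_singleton_self (e 0))

theorem krylovBasis_last {t : E} (ht : ‖t‖ = 1) (hort : ∀ k < n, ⟪t, (T ^ k) v⟫ = 0) :
    e (Fin.last n) = t ∨ e (Fin.last n) = -t := by
  have hspan : ∀ k ≠ Fin.last n, ⟪e k, t⟫ = 0 := by
    intro k hk
    have hek : e k ∈ LinearMap.ker (innerₛₗ ℝ t) := by
      refine Submodule.span_le.mpr ?_
        ((he k).le (Submodule.subset_span ⟨k, Set.self_mem_Iic, rfl⟩))
      rintro _ ⟨i, hi, rfl⟩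
      exact hort i ((Fin.le_def.mp hi).trans_lt (Fin.val_lt_last hk))
    rw [real_inner_comm]
    exact hek
  have ht_eq : t = ⟪e (Fin.last n), t⟫ • e (Fin.last n) :=
    (e.sum_repr' t).symm.trans (Finset.sum_eq_single _
      (fun k _ hk => by rw [hspan k hk, zero_smul]) fun h => absurd (Finset.mem_univ _) h)
  have := eq_or_eq_neg_of_mem_span_singleton ht (e.norm_eq_one (Fin.last n))
    (Submodule.mem_span_singleton.mpr ⟨_, ht_eq.symm⟩)
  rcases this with rfl | rfl
  · exact Or.inl rfl
  · exact Or.inr (neg_neg _).symm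

end Lanczos

section Jacobi

open scoped RealInnerProductSpace

theorem toEuclideanLin_diagonal_pow_apply {ι : Type*} [Fintype ι] [DecidableEq ι] (g : ι → ℝ)
    (k : ℕ) (x : EuclideanSpace ℝ ι) (j : ι) :
    (toEuclideanLin (diagonal g) ^ k) x j = g j ^ k * x j := by
  induction k with
  | zero => simp
  | succ k ih =>
    rw [pow_succ', Module.End.mul_apply, toLpLin_apply, PiLp.toLp_apply, mulVec_diagonal, ih,
      pow_succ', mul_assoc]

theorem linearIndependent_krylov_diagonal {m : ℕ} {g v : Fin m → ℝ} (hg : Function.Injective g)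
    (hv : ∀ j, v j ≠ 0) :
    LinearIndependent ℝ fun k : Fin m =>
      (toEuclideanLin (diagonal g) ^ (k : ℕ)) (WithLp.toLp 2 v) := by
  refine LinearIndependent.of_comp (WithLp.linearEquiv 2 ℝ (Fin m → ℝ)).toLinearMap ?_
  have hrows : (WithLp.linearEquiv 2 ℝ (Fin m → ℝ)).toLinearMap ∘ (fun k : Fin m =>
      (toEuclideanLin (diagonal g) ^ (k : ℕ)) (WithLp.toLp 2 v)) =
      ((vandermonde g)ᵀ * diagonal v).row := by
    ext k j
    refine (toEuclideanLin_diagonal_pow_apply g k _ j).trans ?_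
    rw [row_apply, mul_diagonal, transpose_apply, vandermonde_apply]
  rw [hrows]
  refine linearIndependent_rows_of_det_ne_zero (A := (vandermonde g)ᵀ * diagonal v) ?_
  rw [det_mul, det_transpose, det_diagonal]
  exact mul_ne_zero (det_vandermonde_ne_zero_iff.mpr hg)
    (Finset.prod_ne_zero_iff.mpr fun j _ => hv j)

theorem exists_inS_pathGraph_mul_eq_mul_diagonal {n : ℕ} {g v t : Fin (n + 1) → ℝ}
    (hg : Function.Injective g) (hv0 : ∀ j, v j ≠ 0) (hv : ∑ j, v j ^ 2 = 1)
    (ht : ∑ j, t j ^ 2 = 1) (hort : ∀ k < n, ∑ j, g j ^ k * (t j * v j) = 0) :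
    ∃ J V : Matrix (Fin (n + 1)) (Fin (n + 1)) ℝ, inS (SimpleGraph.pathGraph (n + 1)) J ∧
      V * Vᵀ = 1 ∧ J * V = V * diagonal g ∧
      ∀ j, V 0 j ^ 2 = v j ^ 2 ∧ V (Fin.last n) j ^ 2 = t j ^ 2 := by
  set T := toEuclideanLin (diagonal g)
  have hT : T.IsSymmetric := isSymmetric_toEuclideanLin_iff.mpr (isHermitian_diagonal g)
  have norm_toLp : ∀ x : Fin (n + 1) → ℝ, ∑ j, x j ^ 2 = 1 → ‖WithLp.toLp 2 x‖ = 1 :=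
    fun x hx => by simp [EuclideanSpace.norm_eq, hx]
  obtain ⟨e, he⟩ := exists_orthonormalBasis_span_image_Iic_eq
    (linearIndependent_krylov_diagonal hg hv0) (by simp)
  have hfirst := krylovBasis_zero he (norm_toLp v hv)
  have hlast := krylovBasis_last he (norm_toLp t ht) fun k hk => by
    rw [← hort k hk, PiLp.inner_apply]
    refine Finset.sum_congr rfl fun j _ => ?_
    rw [toEuclideanLin_diagonal_pow_apply, RCLike.inner_apply, conj_trivial]
    ring
  refine ⟨of fun k l => ⟪e k, T (e l)⟫, of fun k j => e k j, inS_pathGraph_of_krylovBasis he hT,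
    ?_, ?_, fun j => ⟨?_, ?_⟩⟩
  · ext k l
    simpa [PiLp.inner_apply, mul_apply, one_apply, mul_comm] using
      orthonormal_iff_ite.mp e.orthonormal k l
  · ext k j
    have parseval : ∑ l, ⟪e k, T (e l)⟫ * e l j = T (e k) j := by
      simpa [← hT (e k), EuclideanSpace.inner_single_right] using
        e.sum_inner_mul_inner (T (e k)) (EuclideanSpace.single j 1)
    have hTe : T (e k) j = g j * e k j := by
      have := toEuclideanLin_diagonal_pow_apply g 1 (e k) j
      rwa [pow_one, pow_one] at this
    rw [mul_diagonal, mul_apply]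
    exact parseval.trans (hTe.trans (mul_comm _ _))
  · rcases hfirst with h | h <;> simp [h]
  · rcases hlast with h | h <;> simp [h]

theorem exists_strictlyInterlaces_inS_pathGraph {n : ℕ} {d : Fin (n + 2) → ℝ}
    (hd : StrictMono d) :
    ∃ g : Fin (n + 1) → ℝ, StrictlyInterlaces g d ∧
      ∃ J V : Matrix (Fin (n + 1)) (Fin (n + 1)) ℝ, inS (SimpleGraph.pathGraph (n + 1)) J ∧
        V * Vᵀ = 1 ∧ J * V = V * diagonal g ∧
        ∃ b ≠ 0, ∀ j, b ^ 2 * (V 0 j ^ 2 + V (Fin.last n) j ^ 2) = secularWeight d g j := by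
  obtain ⟨g, hgd, c, hc, hf⟩ := exists_strictlyInterlaces_abs_prod_eq hd
  set f : Fin (n + 1) → ℝ := fun j => ∏ l, (g j - d l)
  set W := secularWeight d g
  have hf_sq : ∀ j, f j ^ 2 = c ^ 2 := fun j => by rw [← sq_abs, hf]
  have hW : ∀ j, 0 < W j := hgd.secularWeight_pos
  have hsum : 0 < ∑ j, W j := Finset.sum_pos (fun j _ => hW j) Finset.univ_nonempty
  set T := ∑ j, W j
  set v : Fin (n + 1) → ℝ := fun j => √(W j / T)
  have hv_sq : ∀ j, v j ^ 2 = W j / T := fun j => Real.sq_sqrt (div_pos (hW j) hsum).le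
  have ht_sq : ∀ j, (f j / c * v j) ^ 2 = W j / T := fun j => by
    rw [mul_pow, div_pow, hf_sq, div_self (pow_pos hc 2).ne', one_mul, hv_sq]
  have hunit : ∑ j, W j / T = 1 := by rw [← Finset.sum_div, div_self hsum.ne']
  have htv : ∀ j, f j / c * v j * v j = -(c / T) * Lagrange.nodalWeight Finset.univ g j :=
    fun j => calc
      f j / c * v j * v j = f j / c * (W j / T) := by rw [← hv_sq]; ring
      _ = -(f j ^ 2 / (c * T)) * Lagrange.nodalWeight Finset.univ g j := by
        simp only [W, secularWeight, f]; ring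
      _ = -(c / T) * Lagrange.nodalWeight Finset.univ g j := by
        rw [hf_sq]; field_simp
  obtain ⟨J, V, hJ, hV, hJV, hends⟩ := exists_inS_pathGraph_mul_eq_mul_diagonal
    (v := v) (t := fun j => f j / c * v j) hgd.strictMono_left.injective
    (fun j => (Real.sqrt_pos.mpr (div_pos (hW j) hsum)).ne')
    (by simp only [hv_sq, hunit]) (by simp only [ht_sq, hunit]) fun k hk => by
      simp only [htv, mul_left_comm _ (-(c / T))]
      rw [← Finset.mul_sum, sum_pow_mul_nodalWeight_eq_zero hgd.strictMono_left.injective.injOn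
        (by simpa using hk), mul_zero]
  refine ⟨g, hgd, J, V, hJ, hV, hJV, √(T / 2), (Real.sqrt_pos.mpr (half_pos hsum)).ne',
    fun j => ?_⟩
  rw [(hends j).1, (hends j).2, ht_sq, hv_sq, Real.sq_sqrt (half_pos hsum).le]
  field_simp
  ring

end Jacobi

section CycleGraph

theorem cycleGraph_adj_iff_val {n : ℕ} (hn : 2 ≤ n) {u v : Fin n} :
    (SimpleGraph.cycleGraph n).Adj u v ↔ (u : ℕ) + 1 = v ∨ (v : ℕ) + 1 = u ∨
      ((u : ℕ) = 0 ∧ (v : ℕ) + 1 = n) ∨ ((v : ℕ) = 0 ∧ (u : ℕ) + 1 = n) := by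
  have hsub : ∀ x y : Fin n, ((x - y : Fin n) : ℕ) = 1 ↔
      (y : ℕ) + 1 = x ∨ ((x : ℕ) = 0 ∧ (y : ℕ) + 1 = n) := fun x y => by
    rcases le_or_gt y x with h | h
    · rw [Fin.sub_val_of_le h]
      omega
    · rw [Fin.coe_sub_iff_lt.mpr h]
      omega
  rw [SimpleGraph.cycleGraph_adj', hsub, hsub]
  omega

theorem inS_comap_iff {V W : Type*} (G : SimpleGraph W) (φ : V ≃ W) {B : Matrix V V ℝ} :
    inS (G.comap φ) B ↔ inS G (B.submatrix φ.symm φ.symm) := by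
  constructor
  · rintro ⟨hB, hadj⟩
    exact ⟨hB.submatrix _, fun i j hij => (hadj _ _ (φ.symm.injective.ne hij)).trans (by simp)⟩
  · rintro ⟨hB, hadj⟩
    refine ⟨?_, fun i j hij => ?_⟩
    · simpa using hB.submatrix φ
    · simpa using hadj _ _ (φ.injective.ne hij)

end CycleGraph

section RealForm

/-- The real matrix of the `ℂ`-linear map `H` after identifying `ℂ ^ V` with `ℝ ^ (V ⊕ V)` by
listing the real parts before the imaginary parts. -/
def realForm {V : Type*} (H : Matrix V V ℂ) : Matrix (V ⊕ V) (V ⊕ V) ℝ :=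
  fromBlocks (H.map Complex.re) (-H.map Complex.im) (H.map Complex.im) (H.map Complex.re)

/-- `e` and `f` are orthonormal eigenvectors of `B` for the eigenvalue `x`. -/
structure IsOrthonormalEigenpair {V : Type*} [Fintype V] (B : Matrix V V ℝ) (x : ℝ)
    (e f : V → ℝ) : Prop where
  mulVec_left : B *ᵥ e = x • e
  mulVec_right : B *ᵥ f = x • f
  dotProduct_left : e ⬝ᵥ e = 1
  dotProduct_right : f ⬝ᵥ f = 1
  dotProduct_left_right : e ⬝ᵥ f = 0

theorem IsOrthonormalEigenpair.submatrix {V W : Type*} [Fintype V] [Fintype W]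
    {B : Matrix V V ℝ} {x : ℝ} {e f : V → ℝ} (h : IsOrthonormalEigenpair B x e f) (φ : W ≃ V) :
    IsOrthonormalEigenpair (B.submatrix φ φ) x (e ∘ φ) (f ∘ φ) where
  mulVec_left := by
    rw [submatrix_mulVec_equiv, Function.comp_assoc, Equiv.self_comp_symm, Function.comp_id,
      h.mulVec_left]
    rfl
  mulVec_right := by
    rw [submatrix_mulVec_equiv, Function.comp_assoc, Equiv.self_comp_symm, Function.comp_id,
      h.mulVec_right]
    rfl
  dotProduct_left := by rw [comp_equiv_dotProduct_comp_equiv, h.dotProduct_left]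
  dotProduct_right := by rw [comp_equiv_dotProduct_comp_equiv, h.dotProduct_right]
  dotProduct_left_right := by rw [comp_equiv_dotProduct_comp_equiv, h.dotProduct_left_right]

variable {V : Type*} [Fintype V]

theorem realForm_mulVec (H : Matrix V V ℂ) (z : V → ℂ) :
    realForm H *ᵥ Sum.elim (Complex.re ∘ z) (Complex.im ∘ z) =
      Sum.elim (Complex.re ∘ (H *ᵥ z)) (Complex.im ∘ (H *ᵥ z)) := by
  rw [realForm, fromBlocks_mulVec]
  ext (i | i) <;>
    simp [mulVec, dotProduct, Complex.mul_re, Complex.mul_im, Finset.sum_add_distrib,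
      sub_eq_add_neg, add_comm]

theorem exists_isOrthonormalEigenpair_realForm {H : Matrix V V ℂ} {x : ℝ} {z : V → ℂ}
    (hz : z ≠ 0) (hHz : H *ᵥ z = (x : ℂ) • z) :
    ∃ e f, IsOrthonormalEigenpair (realForm H) x e f := by
  let vec : (V → ℂ) → V ⊕ V → ℝ := fun y => Sum.elim (Complex.re ∘ y) (Complex.im ∘ y)
  have hvec : ∀ y, H *ᵥ y = (x : ℂ) • y → realForm H *ᵥ vec y = x • vec y := fun y hy => by
    rw [realForm_mulVec, hy]
    ext (i | i) <;> simp [vec]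
  have hIz : H *ᵥ (Complex.I • z) = (x : ℂ) • Complex.I • z := by
    rw [mulVec_smul, hHz, smul_comm]
  have hvec0 : vec z ≠ 0 := fun h => hz (funext fun i => Complex.ext
    (congrFun h (Sum.inl i)) (congrFun h (Sum.inr i)))
  set s := vec z ⬝ᵥ vec z with hs
  have hs_pos : 0 < s := by
    simpa only [star_trivial] using dotProduct_star_self_pos_iff.mpr hvec0
  have hrot : vec (Complex.I • z) ⬝ᵥ vec (Complex.I • z) = s := by
    simp [hs, vec, dotProduct, add_comm]
  have horth : vec z ⬝ᵥ vec (Complex.I • z) = 0 := by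
    simp [vec, dotProduct, mul_comm]
  have hnormalize : (√s)⁻¹ * ((√s)⁻¹ * s) = 1 := by
    rw [← mul_assoc, ← mul_inv, Real.mul_self_sqrt hs_pos.le, inv_mul_cancel₀ hs_pos.ne']
  exact ⟨(√s)⁻¹ • vec z, (√s)⁻¹ • vec (Complex.I • z),
    by rw [mulVec_smul, hvec z hHz, smul_comm], by rw [mulVec_smul, hvec _ hIz, smul_comm],
    by rw [smul_dotProduct, dotProduct_smul, ← hs, smul_eq_mul, smul_eq_mul, hnormalize],
    by rw [smul_dotProduct, dotProduct_smul, hrot, smul_eq_mul, smul_eq_mul, hnormalize],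
    by rw [smul_dotProduct, dotProduct_smul, horth, smul_zero, smul_zero]⟩

end RealForm

section DoubledCycle

/-- The vertices of two copies of a hub followed by a path, in their order along a cycle. -/
def doubledPathEquiv (n : ℕ) :
    (Fin 1 ⊕ Fin (n + 1)) ⊕ (Fin 1 ⊕ Fin (n + 1)) ≃ Fin (2 * (n + 2)) :=
  ((finSumFinEquiv.sumCongr finSumFinEquiv).trans finSumFinEquiv).trans (finCongr (by ring))

theorem val_doubledPathEquiv (n : ℕ) :
    (∀ i, (doubledPathEquiv n (Sum.inl (Sum.inl i)) : ℕ) = 0) ∧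
    (∀ j, (doubledPathEquiv n (Sum.inl (Sum.inr j)) : ℕ) = 1 + j) ∧
    (∀ i, (doubledPathEquiv n (Sum.inr (Sum.inl i)) : ℕ) = n + 2) ∧
    ∀ j, (doubledPathEquiv n (Sum.inr (Sum.inr j)) : ℕ) = n + 3 + j := by
  refine ⟨fun i => ?_, fun j => ?_, fun i => ?_, fun j => ?_⟩ <;>
    simp only [doubledPathEquiv, Equiv.trans_apply, Equiv.sumCongr_apply, Sum.map_inl, Sum.map_inr,
      finSumFinEquiv_apply_left, finSumFinEquiv_apply_right, finCongr_apply, Fin.val_cast,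
      Fin.val_castAdd, Fin.val_natAdd] <;>
    omega

/-- The Hermitian border of the real matrix `J` by the vector `p + i q`. -/
def hermitianBorder {V : Type*} (a : ℝ) (p q : V → ℝ) (J : Matrix V V ℝ) :
    Matrix (Fin 1 ⊕ V) (Fin 1 ⊕ V) ℂ :=
  border (a : ℂ) (fun v => ⟨p v, -q v⟩) (fun v => ⟨p v, q v⟩) (J.map (↑))

theorem realForm_hermitianBorder {V : Type*} (a : ℝ) (p q : V → ℝ) (J : Matrix V V ℝ) :
    realForm (hermitianBorder a p q J) =
      fromBlocks (border a p p J) (border 0 q (-q) 0) (border 0 (-q) q 0) (border a p p J) := by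
  rw [realForm, fromBlocks_inj]
  refine ⟨?_, ?_, ?_, ?_⟩ <;> ext (i | i) (j | j) <;> simp [hermitianBorder, border]

/-- Joining the border vertex to one end of the path through the real part and to the other end
through the imaginary part makes the real form connect the two copies of the path into a cycle. -/
theorem inS_cycleGraph_realForm_hermitianBorder {n : ℕ} (a : ℝ) {b : ℝ} (hb : b ≠ 0)
    {J : Matrix (Fin (n + 1)) (Fin (n + 1)) ℝ} (hJ : inS (SimpleGraph.pathGraph (n + 1)) J) :
    inS ((SimpleGraph.cycleGraph (2 * (n + 2))).comap (doubledPathEquiv n))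
      (realForm (hermitianBorder a (Pi.single 0 b) (Pi.single (Fin.last n) b) J)) := by
  rw [realForm_hermitianBorder]
  refine ⟨IsSymm.fromBlocks (isSymm_border _ _ hJ.1) ?_ (isSymm_border _ _ hJ.1), fun i j hij => ?_⟩
  · ext (i | i) (j | j) <;> rfl
  obtain ⟨hx, hp, hx', hp'⟩ := val_doubledPathEquiv n
  have hpath : ∀ i j, i ≠ j → (J i j ≠ 0 ↔ (i : ℕ) + 1 = j ∨ (j : ℕ) + 1 = i) := fun i j hij =>
    (hJ.2 i j hij).trans SimpleGraph.pathGraph_adj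
  have hsingle : ∀ m i : Fin (n + 1), Pi.single (M := fun _ => ℝ) m b i ≠ 0 ↔ (i : ℕ) = m :=
    fun m i => by rw [Pi.single_apply, ite_ne_right_iff, and_iff_left hb, Fin.ext_iff]
  rw [SimpleGraph.comap_adj, cycleGraph_adj_iff_val (by omega)]
  rcases i with (i | i) | (i | i) <;> rcases j with (j | j) | (j | j) <;>
    simp only [hx, hx', hp, hp', fromBlocks_apply₁₁, fromBlocks_apply₁₂, fromBlocks_apply₂₁,
      fromBlocks_apply₂₂, border, replicateRow_apply, replicateCol_apply, of_apply, Pi.neg_apply,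
      neg_ne_zero, hsingle, Matrix.zero_apply, ne_self_iff_false, false_iff, true_and,
      Fin.val_last, Fin.val_zero] <;>
    first
    | rw [Subsingleton.elim i j] at hij; exact absurd rfl hij
    | rw [hpath i j fun h => hij (by rw [h])]; omega
    | omega

theorem exists_hermitianBorder_mulVec_eq_smul {n : ℕ} {g : Fin (n + 1) → ℝ} {d : Fin (n + 2) → ℝ}
    (hgd : StrictlyInterlaces g d) {J V : Matrix (Fin (n + 1)) (Fin (n + 1)) ℝ}
    (hV : V * Vᵀ = 1) (hJV : J * V = V * diagonal g) {b : ℝ}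
    (hW : ∀ j, b ^ 2 * (V 0 j ^ 2 + V (Fin.last n) j ^ 2) = secularWeight d g j) :
    ∃ a, ∀ i, ∃ z ≠ 0, hermitianBorder a (Pi.single 0 b) (Pi.single (Fin.last n) b) J *ᵥ z =
      (d i : ℂ) • z := by
  obtain ⟨a, ha⟩ := hgd.exists_secular
  let U : Fin (n + 1) → Fin (n + 1) → ℂ := fun j v =>
    ⟨b * V 0 j * V v j, b * V (Fin.last n) j * V v j⟩
  have hJU : ∀ j, J.map (↑) *ᵥ U j = (g j : ℂ) • U j := fun j => by
    have hcol : ∀ v, ∑ l, J v l * V l j = V v j * g j := fun v => by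
      rw [← mul_diagonal, ← hJV, mul_apply]
    have hscaled : ∀ (r : ℝ) v, ∑ l, J v l * (r * V l j) = g j * (r * V v j) := fun r v => by
      simp only [mul_left_comm _ r, ← Finset.mul_sum, hcol, mul_comm (g j)]
    ext v
    exact Complex.ext (by simp [mulVec, dotProduct, U, hscaled])
      (by simp [mulVec, dotProduct, U, hscaled])
  have hrow : ∀ m v, ∑ j, V m j * V v j = (1 : Matrix _ _ ℝ) m v := fun m v => by
    rw [← hV, mul_apply]
    rfl
  have hsum : ∑ j, U j = fun v =>
      (⟨(Pi.single 0 b : _ → ℝ) v, (Pi.single (Fin.last n) b : _ → ℝ) v⟩ : ℂ) := by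
    ext v
    refine Complex.ext ?_ ?_ <;>
      simp [U, mul_assoc, ← Finset.mul_sum, hrow, Pi.single_apply, one_apply, eq_comm]
  refine ⟨a, fun i => ⟨_, fun h => one_ne_zero (congrFun h (Sum.inl 0)),
    border_mulVec_eq_smul_of_secular (W := fun j => (secularWeight d g j : ℂ)) hJU (fun j => ?_)
      hsum.symm (fun j => by exact_mod_cast hgd.ne i j) (by exact_mod_cast ha i)⟩⟩
  have hdot : ∀ (m : Fin (n + 1)) (y : Fin (n + 1) → ℝ),
      ∑ l, (Pi.single m b : _ → ℝ) l * y l = b * y m := fun m y => single_dotProduct _ _ _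
  refine Complex.ext ?_ ?_
  · rw [Complex.ofReal_re, ← hW]
    simp only [dotProduct, U, Complex.re_sum, Complex.mul_re, Finset.sum_sub_distrib, neg_mul,
      Finset.sum_neg_distrib, hdot]
    ring
  · rw [Complex.ofReal_im]
    simp only [dotProduct, U, Complex.im_sum, Complex.mul_im, Finset.sum_add_distrib, neg_mul,
      Finset.sum_neg_distrib, hdot]
    ring

theorem exists_inS_cycleGraph_isOrthonormalEigenpair {n : ℕ} {s : Finset ℝ}
    (hs : s.card = n + 2) :
    ∃ B, inS (SimpleGraph.cycleGraph (2 * (n + 2))) B ∧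
      ∀ x ∈ s, ∃ e f, IsOrthonormalEigenpair B x e f := by
  obtain ⟨g, hgd, J, V, hJ, hV, hJV, b, hb, hW⟩ :=
    exists_strictlyInterlaces_inS_pathGraph (s.orderEmbOfFin hs).strictMono
  obtain ⟨a, ha⟩ := exists_hermitianBorder_mulVec_eq_smul hgd hV hJV hW
  refine ⟨_, (inS_comap_iff _ (doubledPathEquiv n)).mp
    (inS_cycleGraph_realForm_hermitianBorder a hb hJ), fun x hx => ?_⟩
  obtain ⟨i, rfl⟩ : x ∈ Set.range (s.orderEmbOfFin hs) := by
    rwa [Finset.range_orderEmbOfFin]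
  obtain ⟨z, hz, hHz⟩ := ha i
  obtain ⟨e, f, hef⟩ := exists_isOrthonormalEigenpair_realForm hz hHz
  exact ⟨_, _, hef.submatrix _⟩

end DoubledCycle

section HubVector

open Polynomial

open Fin.CommRing in
theorem eq_zero_of_mulVec_eq_smul_of_inS_cycleGraph {n : ℕ}
    {B : Matrix (Fin (n + 2)) (Fin (n + 2)) ℝ} (hB : inS (SimpleGraph.cycleGraph (n + 2)) B)
    {ν : ℝ} {y : Fin (n + 2) → ℝ} (hy : B *ᵥ y = ν • y) {v : Fin (n + 2)} (hv : y v = 0)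
    (hv' : y (v + 1) = 0) : y = 0 := by
  have hstep : ∀ w, y w = 0 → y (w + 1) = 0 → y (w + 1 + 1) = 0 := by
    intro w hw hw'
    have hrow : ∑ j, B (w + 1) j * y j = 0 := by
      simpa [mulVec, dotProduct, hw'] using congrFun hy (w + 1)
    rw [Finset.sum_eq_single (w + 1 + 1) (fun j _ hj => ?_) (by simp)] at hrow
    · refine (mul_eq_zero.mp hrow).resolve_left ((hB.2 _ _ (by simp)).mpr ?_)
      rw [SimpleGraph.cycleGraph_adj]
      exact Or.inr (add_sub_cancel_left _ _)
    · by_cases hwj : w + 1 = j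
      · rw [← hwj, hw', mul_zero]
      by_contra hne
      have hadj := (hB.2 _ _ hwj).mp (left_ne_zero_of_mul hne)
      rw [SimpleGraph.cycleGraph_adj] at hadj
      rcases hadj with h | h
      · exact hne (by rw [← add_right_cancel ((sub_eq_iff_eq_add'.mp h)), hw, mul_zero])
      · exact hj (sub_eq_iff_eq_add'.mp h)
  have hpair (k : ℕ) : y (v + (k : Fin (n + 2))) = 0 ∧ y (v + (k : Fin (n + 2)) + 1) = 0 := by
    induction k with
    | zero => simpa using ⟨hv, hv'⟩
    | succ k ih =>
      rw [Nat.cast_succ, ← add_assoc]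
      exact ⟨ih.2, hstep _ ih.1 ih.2⟩
  ext j
  simpa using (hpair ((j - v : Fin (n + 2)) : ℕ)).1

namespace IsOrthonormalEigenpair

variable {V : Type*} [Fintype V] {B : Matrix V V ℝ} {x : ℝ} {e f : V → ℝ}

theorem mulVec_smul_add_smul (h : IsOrthonormalEigenpair B x e f) (c s : ℝ) :
    B *ᵥ (c • e + s • f) = x • (c • e + s • f) := by
  rw [mulVec_add, mulVec_smul, mulVec_smul, h.mulVec_left, h.mulVec_right]
  module

theorem smul_add_smul_dotProduct (h : IsOrthonormalEigenpair B x e f) (c s c' s' : ℝ) :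
    (c • e + s • f) ⬝ᵥ (c' • e + s' • f) = c * c' + s * s' := by
  simp only [add_dotProduct, dotProduct_add, smul_dotProduct, dotProduct_smul, smul_eq_mul,
    h.dotProduct_left, h.dotProduct_right, h.dotProduct_left_right, dotProduct_comm f e]
  ring

theorem rotate (h : IsOrthonormalEigenpair B x e f) {c s : ℝ} (hcs : c ^ 2 + s ^ 2 = 1) :
    IsOrthonormalEigenpair B x (c • e + s • f) (-s • e + c • f) where
  mulVec_left := h.mulVec_smul_add_smul c s
  mulVec_right := h.mulVec_smul_add_smul (-s) c
  dotProduct_left := by rw [h.smul_add_smul_dotProduct, ← hcs]; ring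
  dotProduct_right := by rw [h.smul_add_smul_dotProduct, ← hcs]; ring
  dotProduct_left_right := by rw [h.smul_add_smul_dotProduct]; ring

theorem eq_zero_of_smul_add_smul_eq_zero (h : IsOrthonormalEigenpair B x e f) {c s : ℝ}
    (hcs : c • e + s • f = 0) : c = 0 ∧ s = 0 := by
  constructor
  · simpa [h.dotProduct_left, h.dotProduct_left_right] using congrArg (e ⬝ᵥ ·) hcs
  · simpa [h.dotProduct_right, dotProduct_comm f e, h.dotProduct_left_right] using
      congrArg (f ⬝ᵥ ·) hcs

theorem apply_ne_zero_or {n : ℕ} {B : Matrix (Fin (n + 2)) (Fin (n + 2)) ℝ}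
    {e f : Fin (n + 2) → ℝ} (h : IsOrthonormalEigenpair B x e f)
    (hB : inS (SimpleGraph.cycleGraph (n + 2)) B) (v : Fin (n + 2)) : e v ≠ 0 ∨ f v ≠ 0 := by
  by_contra! hv
  have hcomb : ∀ c s : ℝ, c * e (v + 1) + s * f (v + 1) = 0 → c = 0 ∧ s = 0 := fun c s hcs =>
    h.eq_zero_of_smul_add_smul_eq_zero (eq_zero_of_mulVec_eq_smul_of_inS_cycleGraph hB
      (h.mulVec_smul_add_smul c s) (by simp [hv]) hcs)
  have hnext := hcomb (f (v + 1)) (-e (v + 1)) (by ring)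
  exact one_ne_zero (hcomb 1 0 (by simpa using hnext.2)).1

end IsOrthonormalEigenpair

theorem exists_sq_add_sq_eq_one_forall_ne_zero {V : Type*} [Finite V] {e f : V → ℝ}
    (hef : ∀ v, e v ≠ 0 ∨ f v ≠ 0) (k : V → ℝ) :
    ∃ c s : ℝ, c ^ 2 + s ^ 2 = 1 ∧ ∀ v, c * e v + s * f v + k v ≠ 0 := by
  cases nonempty_fintype V
  -- the rational parametrisation of the circle makes each condition a polynomial one
  let p : V → ℝ[X] := fun v => C (k v - e v) * X ^ 2 + C (2 * f v) * X + C (k v + e v)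
  have hp : ∀ v, p v ≠ 0 := fun v hpv => by
    have heval : ∀ t, (k v - e v) * t ^ 2 + 2 * f v * t + (k v + e v) = 0 := fun t => by
      simpa [p] using congrArg (eval t) hpv
    have hf : f v = 0 := by linarith [heval 1, heval (-1)]
    exact (hef v).elim (fun he => he (by linarith [heval 0, heval 1])) fun hf' => hf' hf
  obtain ⟨t, ht⟩ : ∃ t, (∏ v, p v).eval t ≠ 0 := by
    by_contra! h
    exact Finset.prod_ne_zero_iff.mpr (fun v _ => hp v) (Polynomial.funext (by simpa using h))
  have hpos : 0 < 1 + t ^ 2 := by positivity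
  refine ⟨(1 - t ^ 2) / (1 + t ^ 2), 2 * t / (1 + t ^ 2), by field_simp; ring, fun v hv => ?_⟩
  rw [eval_prod, Finset.prod_ne_zero_iff] at ht
  refine ht v (Finset.mem_univ v) ?_
  field_simp at hv
  simp only [p, eval_add, eval_mul, eval_C, eval_pow, eval_X]
  linarith

theorem exists_isOrthonormalEigenpair_sum_ne_zero {n k : ℕ}
    {B : Matrix (Fin (n + 2)) (Fin (n + 2)) ℝ} (hB : inS (SimpleGraph.cycleGraph (n + 2)) B)
    {mu r : Fin (k + 1) → ℝ} (hr : ∀ i, r i ≠ 0)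
    (hmu : ∀ i, ∃ e f, IsOrthonormalEigenpair B (mu i) e f) :
    ∃ e f : Fin (k + 1) → Fin (n + 2) → ℝ,
      (∀ i, IsOrthonormalEigenpair B (mu i) (e i) (f i)) ∧ ∀ v, (∑ i, r i • e i) v ≠ 0 := by
  choose e f hef using hmu
  obtain ⟨c, s, hcs, hne⟩ := exists_sq_add_sq_eq_one_forall_ne_zero
    (e := r 0 • e 0) (f := r 0 • f 0)
    (fun v => ((hef 0).apply_ne_zero_or hB v).imp (mul_ne_zero (hr 0)) (mul_ne_zero (hr 0)))
    (∑ i : Fin k, r i.succ • e i.succ)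
  refine ⟨Fin.cons (c • e 0 + s • f 0) (Fin.tail e), Fin.cons (-s • e 0 + c • f 0) (Fin.tail f),
    Fin.cases ((hef 0).rotate hcs) fun i => hef i.succ, fun v => ?_⟩
  convert hne v using 1
  simp only [Fin.sum_univ_succ, Fin.cons_zero, Fin.cons_succ, Fin.tail, Pi.add_apply,
    Pi.smul_apply, smul_eq_mul]
  ring

end HubVector

section Realization

theorem nsmul_map_univ_le_of_forall_le_count {ι α : Type*} [Fintype ι] [DecidableEq α]
    {f : ι → α} (hf : f.Injective) {p : ℕ} {s : Multiset α} (hs : ∀ i, p ≤ s.count (f i)) :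
    p • Finset.univ.val.map f ≤ s := by
  refine Multiset.le_iff_count.mpr fun x => ?_
  rw [Multiset.count_nsmul]
  by_cases hx : x ∈ Finset.univ.val.map f
  · rw [Multiset.count_eq_one_of_mem (Finset.univ.nodup.map hf) hx, mul_one]
    obtain ⟨i, -, rfl⟩ := Multiset.mem_map.mp hx
    exact hs i
  · rw [Multiset.count_eq_zero_of_notMem hx, mul_zero]
    exact Nat.zero_le _

variable {V : Type*} [Fintype V] {J : Matrix V V ℝ} {u : V → ℝ}

theorem border_mulVec_elim_zero (a : ℝ) {x : ℝ} {y : V → ℝ} (hy : J *ᵥ y = x • y)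
    (huy : u ⬝ᵥ y = 0) :
    border a u u J *ᵥ Sum.elim (fun _ => 0) y = x • Sum.elim (fun _ => 0) y := by
  rw [border_mulVec, hy, huy]
  ext (_ | v) <;> simp

theorem sum_smul_dotProduct_eq_zero {ι : Type*} [Fintype ι] (hJ : J.IsSymm) {g : ι → ℝ}
    {e : ι → V → ℝ} (he : ∀ i, J *ᵥ e i = g i • e i) (r : ι → ℝ) {x : ℝ} {y : V → ℝ}
    (hy : J *ᵥ y = x • y) (hx : ∀ i, x ≠ g i) : (∑ i, r i • e i) ⬝ᵥ y = 0 := by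
  rw [sum_dotProduct]
  exact Finset.sum_eq_zero fun i _ => by
    rw [smul_dotProduct, dotProduct_eq_zero_of_mulVec_eq_smul hJ (he i) hy (hx i).symm, smul_zero]

theorem sum_smul_dotProduct_eq_single {ι : Type*} [Fintype ι] (hJ : J.IsSymm) {g : ι → ℝ}
    (hg : g.Injective) {e : ι → V → ℝ} (he : ∀ i, J *ᵥ e i = g i • e i) (r : ι → ℝ) {j : ι}
    {y : V → ℝ} (hy : J *ᵥ y = g j • y) : (∑ i, r i • e i) ⬝ᵥ y = r j * (e j ⬝ᵥ y) := by
  rw [sum_dotProduct, Finset.sum_eq_single_of_mem j (Finset.mem_univ j), smul_dotProduct,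
    smul_eq_mul]
  intro i _ hij
  rw [smul_dotProduct, dotProduct_eq_zero_of_mulVec_eq_smul hJ (he i) hy (hg.ne hij), smul_zero]

variable [DecidableEq V]

theorem one_le_count_roots_charpoly_border (hJ : J.IsSymm) (a : ℝ) {x : ℝ} {y : V → ℝ}
    (hy0 : y ≠ 0) (hy : J *ᵥ y = x • y) (huy : u ⬝ᵥ y = 0) :
    1 ≤ (border a u u J).charpoly.roots.count x := by
  refine card_le_count_roots_of_linearIndependent (isSymm_border a u hJ)
    (w := fun _ : Unit => Sum.elim (fun _ => 0) y)
    (LinearIndependent.of_subsingleton () fun h => hy0 ?_)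
    fun _ => border_mulVec_elim_zero a hy huy
  exact congrArg (· ∘ Sum.inr) h

theorem three_le_count_roots_charpoly_border (hJ : J.IsSymm) {a x : ℝ} {e f ψ : V → ℝ}
    (h : IsOrthonormalEigenpair J x e f) (hue : u ⬝ᵥ e = 0) (huf : u ⬝ᵥ f = 0)
    (hψ : border a u u J *ᵥ Sum.elim (fun _ => 1) ψ = x • Sum.elim (fun _ => 1) ψ) :
    3 ≤ (border a u u J).charpoly.roots.count x := by
  refine card_le_count_roots_of_linearIndependent (ι := Fin 3) (isSymm_border a u hJ)
    (w := ![Sum.elim (fun _ => 1) ψ, Sum.elim (fun _ => 0) e, Sum.elim (fun _ => 0) f])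
    (Fintype.linearIndependent_iff.mpr fun c hc => ?_) fun i => ?_
  · rw [Fin.sum_univ_three] at hc
    have hhub : c 0 = 0 := by simpa using congrFun hc (Sum.inl 0)
    have hrim : c 1 • e + c 2 • f = 0 := by
      ext v
      simpa [hhub] using congrFun hc (Sum.inr v)
    have hpair := h.eq_zero_of_smul_add_smul_eq_zero hrim
    exact Fin.forall_fin_succ.mpr ⟨hhub, Fin.forall_fin_two.mpr hpair⟩
  · fin_cases i
    · exact hψ
    · exact border_mulVec_elim_zero a h.mulVec_left hue
    · exact border_mulVec_elim_zero a h.mulVec_right huf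

theorem StrictlyInterlaces.card_image_union_image {n : ℕ} {g : Fin n → ℝ} {d : Fin (n + 1) → ℝ}
    (h : StrictlyInterlaces g d) :
    (Finset.univ.image d ∪ Finset.univ.image g).card = 2 * n + 1 := by
  rw [Finset.card_union_of_disjoint,
    Finset.card_image_of_injective _ h.strictMono_right.injective,
    Finset.card_image_of_injective _ h.strictMono_left.injective, Finset.card_fin, Finset.card_fin]
  · ring
  · simp only [Finset.disjoint_left, Finset.mem_image, Finset.mem_univ, true_and]
    rintro _ ⟨i, rfl⟩ ⟨j, hj⟩
    exact h.ne i j hj.symm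

theorem StrictlyInterlaces.specMultiset_eq {n : ℕ} {g : Fin n → ℝ} {d : Fin (n + 1) → ℝ}
    (h : StrictlyInterlaces g d) {N : Matrix V V ℝ} (hN : N.IsSymm)
    (hV : Fintype.card V = 3 * (n + 1) + n) (hd : ∀ i, 3 ≤ N.charpoly.roots.count (d i))
    (hg : ∀ j, 1 ≤ N.charpoly.roots.count (g j)) :
    specMultiset N = 3 • Finset.univ.val.map d + Finset.univ.val.map g := by
  have hdisj : Disjoint (3 • Finset.univ.val.map d) (Finset.univ.val.map g) := by
    rw [Multiset.disjoint_left]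
    intro x hxd hxg
    obtain ⟨i, -, rfl⟩ := Multiset.mem_map.mp (Multiset.mem_of_mem_nsmul hxd)
    obtain ⟨j, -, hj⟩ := Multiset.mem_map.mp hxg
    exact h.ne i j hj.symm
  refine (Multiset.eq_of_le_of_card_le ?_ ?_).symm
  · rw [Multiset.add_eq_union_iff_disjoint.mpr hdisj]
    refine Multiset.union_le
      (nsmul_map_univ_le_of_forall_le_count h.strictMono_right.injective hd) ?_
    rw [← one_nsmul (Multiset.map g _)]
    exact nsmul_map_univ_le_of_forall_le_count h.strictMono_left.injective hg
  · rw [specMultiset, card_roots_charpoly_of_isSymm hN, hV]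
    simp

theorem StrictlyInterlaces.exists_inS_graphJoin_cycleGraph {k : ℕ} {mu : Fin (k + 1) → ℝ}
    {lam : Fin (k + 2) → ℝ} (h : StrictlyInterlaces mu lam) :
    ∃ N, inS (graphJoin (⊤ : SimpleGraph (Fin 1)) (SimpleGraph.cycleGraph (2 * (2 * k + 3)))) N ∧
      specMultiset N = 3 • Finset.univ.val.map lam + Finset.univ.val.map mu := by
  obtain ⟨B, hB, hpair⟩ := exists_inS_cycleGraph_isOrthonormalEigenpair (n := 2 * k + 1)
    (s := Finset.univ.image lam ∪ Finset.univ.image mu) (by rw [h.card_image_union_image]; ring)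
  have hlam : ∀ i, ∃ e f, IsOrthonormalEigenpair B (lam i) e f := fun i =>
    hpair _ (Finset.mem_union_left _ (Finset.mem_image_of_mem _ (Finset.mem_univ i)))
  have hmu : ∀ i, ∃ e f, IsOrthonormalEigenpair B (mu i) e f := fun i =>
    hpair _ (Finset.mem_union_right _ (Finset.mem_image_of_mem _ (Finset.mem_univ i)))
  have hr : ∀ i, √(secularWeight lam mu i) ≠ 0 := fun i =>
    (Real.sqrt_pos.mpr (h.secularWeight_pos i)).ne'
  obtain ⟨e, f, hef, hu⟩ := exists_isOrthonormalEigenpair_sum_ne_zero hB hr hmu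
  obtain ⟨a, ha⟩ := h.exists_secular
  have he : ∀ i, B *ᵥ e i = mu i • e i := fun i => (hef i).mulVec_left
  set r := fun i => √(secularWeight lam mu i)
  refine ⟨border a (∑ i, r i • e i) (∑ i, r i • e i) B, inS_graphJoin_border hB a hu,
    h.specMultiset_eq (isSymm_border a _ hB.1) (by
      rw [Fintype.card_sum, Fintype.card_fin, Fintype.card_fin]
      ring) (fun i => ?_) fun j => ?_⟩
  · obtain ⟨e', f', hef'⟩ := hlam i
    refine three_le_count_roots_charpoly_border hB.1 hef'
      (sum_smul_dotProduct_eq_zero hB.1 he r hef'.mulVec_left (h.ne i))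
      (sum_smul_dotProduct_eq_zero hB.1 he r hef'.mulVec_right (h.ne i))
      (border_mulVec_eq_smul_of_secular (fun j => ?_) (fun j => ?_) rfl (h.ne i) (ha i))
    · rw [mulVec_smul, he, smul_comm]
    · rw [dotProduct_smul, sum_smul_dotProduct_eq_single hB.1 h.strictMono_left.injective he r
        (he j), (hef j).dotProduct_left, mul_one, smul_eq_mul]
      exact Real.mul_self_sqrt (h.secularWeight_pos j).le
  · refine one_le_count_roots_charpoly_border hB.1 a (y := f j) (fun hf => ?_)
      (hef j).mulVec_right ?_
    · simpa [hf] using (hef j).dotProduct_right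
    · rw [sum_smul_dotProduct_eq_single hB.1 h.strictMono_left.injective he r
        (hef j).mulVec_right, (hef j).dotProduct_left_right, mul_zero]

end Realization

section LowerBound

theorem exists_toBlocks₂₂_mulVec_eq_smul_of_card_lt_count_roots {V ι : Type*} [Fintype V]
    [DecidableEq V] [Fintype ι] {A : Matrix (Fin 1 ⊕ V) (Fin 1 ⊕ V) ℝ} (hA : A.IsSymm) {ν : ℝ}
    (f : ι → V) (hcount : 1 + Fintype.card ι < A.charpoly.roots.count ν) :
    ∃ y ≠ 0, A.toBlocks₂₂ *ᵥ y = ν • y ∧ ∀ i, y (f i) = 0 := by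
  obtain ⟨x, hx0, hx, hxf⟩ := exists_mulVec_eq_smul_of_card_lt_count_roots hA
    (Sum.map (id : Fin 1 → Fin 1) f) (by simpa using hcount)
  have hhub : x ∘ Sum.inl = 0 := funext fun i => hxf (Sum.inl i)
  refine ⟨x ∘ Sum.inr, fun hrim => hx0 ?_, ?_, fun i => hxf (Sum.inr i)⟩
  · rw [← Sum.elim_comp_inl_inr x, hhub, hrim]
    exact Sum.elim_zero_zero
  · rw [← fromBlocks_toBlocks A, fromBlocks_mulVec, hhub, mulVec_zero, mulVec_zero, zero_add,
      zero_add] at hx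
    exact congrArg (· ∘ Sum.inr) hx

theorem det_eq_prod_diag_add_corner_mul_det {R : Type*} [CommRing R] {n : ℕ}
    {L : Matrix (Fin (n + 2)) (Fin (n + 2)) R}
    (hL : ∀ i j, i < j → i ≠ 0 ∨ j ≠ Fin.last (n + 1) → L i j = 0) :
    L.det = ∏ i, L i i +
      (-1) ^ (n + 1) * L 0 (Fin.last (n + 1)) * (L.submatrix Fin.succ Fin.castSucc).det := by
  have hmid : ∀ j : Fin n, L 0 j.castSucc.succ = 0 := fun j =>
    hL _ _ (Fin.succ_pos _) (Or.inr fun h => (Fin.castSucc_lt_last j).ne (Fin.succ_injective _ h))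
  have htri : (L.submatrix Fin.succ Fin.succ).det = ∏ i : Fin (n + 1), L i.succ i.succ :=
    det_of_isLowerTriangular _ fun i j (hij : i < j) =>
      hL _ _ (Fin.succ_lt_succ_iff.mpr hij) (Or.inl (Fin.succ_ne_zero i))
  rw [det_succ_row_zero, Fin.sum_univ_succ, Fin.sum_univ_castSucc, Fin.prod_univ_succ,
    Fin.succ_last, Fin.succAbove_last, Fin.succAbove_zero, htri]
  simp [hmid]

/-- Since `y 0 = 0`, deleting the first column and the last row of `B - ν` leaves a singular matrix;
the left-hand side is the expansion of its determinant along the first row. -/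
theorem prod_add_corner_mul_det_eq_zero {n : ℕ} {B : Matrix (Fin (n + 3)) (Fin (n + 3)) ℝ}
    (hB : inS (SimpleGraph.cycleGraph (n + 3)) B) {ν : ℝ} {y : Fin (n + 3) → ℝ} (hy0 : y ≠ 0)
    (hy : B *ᵥ y = ν • y) (hy1 : y 0 = 0) :
    ∏ i : Fin (n + 2), B i.castSucc i.succ + (-1) ^ (n + 1) * B 0 (Fin.last (n + 2)) *
      ((B - scalar _ ν).submatrix (Fin.succ ∘ Fin.castSucc) (Fin.succ ∘ Fin.castSucc)).det = 0 := by
  set M := B - scalar (Fin (n + 3)) ν with hM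
  have hoff : ∀ i j, i ≠ j → M i j = B i j := fun i j hij => by
    rw [hM, Matrix.sub_apply, scalar_apply, diagonal_apply_ne _ hij, sub_zero]
  have hsing : (M.submatrix Fin.castSucc Fin.succ).det = 0 := by
    refine exists_mulVec_eq_zero_iff.mp ⟨y ∘ Fin.succ, fun h => hy0 ?_, funext fun i => ?_⟩
    · exact funext (Fin.cases hy1 (congrFun h))
    · have hrow : (M *ᵥ y) i.castSucc = 0 := by
        rw [hM, sub_mulVec, hy]
        simp
      rwa [mulVec, dotProduct, Fin.sum_univ_succ, hy1, mul_zero, zero_add] at hrow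
  rw [det_eq_prod_diag_add_corner_mul_det fun i j hij hne => ?_] at hsing
  · simpa [hoff, Fin.ext_iff, Function.comp_def] using hsing
  · have hne' : i.castSucc ≠ j.succ :=
      ((Fin.castSucc_lt_castSucc_iff.mpr hij).trans j.castSucc_lt_succ).ne
    rw [submatrix_apply, hoff _ _ hne', ← not_ne_iff, hB.2 _ _ hne',
      cycleGraph_adj_iff_val (by omega)]
    simp only [Fin.lt_def, ne_eq, Fin.ext_iff, Fin.val_zero, Fin.val_last, Fin.val_castSucc,
      Fin.val_succ] at hij hne ⊢
    omega

variable {n : ℕ} {A : Matrix (Fin 1 ⊕ Fin (n + 3)) (Fin 1 ⊕ Fin (n + 3)) ℝ}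

theorem count_roots_charpoly_le_three_of_inS_graphJoin_cycleGraph
    (hA : inS (graphJoin (⊤ : SimpleGraph (Fin 1)) (SimpleGraph.cycleGraph (n + 3))) A) (ν : ℝ) :
    A.charpoly.roots.count ν ≤ 3 := by
  obtain ⟨hsymm, hB, -⟩ := (inS_graphJoin_top_iff _ A).mp hA
  by_contra! hcount
  obtain ⟨y, hy0, hy, hyv⟩ := exists_toBlocks₂₂_mulVec_eq_smul_of_card_lt_count_roots hsymm
    ![(0 : Fin (n + 3)), 1] (by simpa using hcount)
  exact hy0 (eq_zero_of_mulVec_eq_smul_of_inS_cycleGraph hB hy (hyv 0) (by simpa using hyv 1))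

/-- At a triple eigenvalue the minor indexed by the interior of the rim path has a value that does
not depend on the eigenvalue, while its sign counts the smaller eigenvalues. -/
theorem exists_forall_count_eq_three_neg_one_pow_mul_pos
    (hA : inS (graphJoin (⊤ : SimpleGraph (Fin 1)) (SimpleGraph.cycleGraph (n + 3))) A) :
    ∃ δ : ℝ, ∀ ν, A.charpoly.roots.count ν = 3 →
      0 < (-1) ^ (A.charpoly.roots.filter (· < ν)).card * δ := by
  obtain ⟨hsymm, hB, -⟩ := (inS_graphJoin_top_iff _ A).mp hA
  set B := A.toBlocks₂₂
  have hpath : ∏ i : Fin (n + 2), B i.castSucc i.succ ≠ 0 :=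
    Finset.prod_ne_zero_iff.mpr fun i _ => (hB.2 _ _ i.castSucc_lt_succ.ne).mpr
      ((cycleGraph_adj_iff_val (by omega)).mpr (by simp))
  refine ⟨-(∏ i : Fin (n + 2), B i.castSucc i.succ) /
    ((-1) ^ (n + 1) * B 0 (Fin.last (n + 2))), fun ν hν => ?_⟩
  obtain ⟨y, hy0, hy, hyv⟩ := exists_toBlocks₂₂_mulVec_eq_smul_of_card_lt_count_roots hsymm (ν := ν)
    (fun _ : Unit => (0 : Fin (n + 3))) (by rw [hν, Fintype.card_unit]; norm_num)
  have hexpand := prod_add_corner_mul_det_eq_zero hB hy0 hy (hyv ())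
  set f := (Fin.succ ∘ Fin.castSucc : Fin (n + 1) → Fin (n + 3))
  have hdet : ((A - scalar _ ν).submatrix (Sum.inr ∘ f) (Sum.inr ∘ f)) =
      (B - scalar _ ν).submatrix f f := by
    ext i j
    simp [B, toBlocks₂₂, diagonal_apply]
  have hcorner : (-1) ^ (n + 1) * B 0 (Fin.last (n + 2)) ≠ 0 := fun h =>
    hpath (by rwa [h, zero_mul, add_zero] at hexpand)
  have hδ : -(∏ i : Fin (n + 2), B i.castSucc i.succ) /
      ((-1) ^ (n + 1) * B 0 (Fin.last (n + 2))) =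
        ((A - scalar _ ν).submatrix (Sum.inr ∘ f) (Sum.inr ∘ f)).det := by
    rw [hdet, div_eq_iff hcorner]
    linear_combination -hexpand
  rw [hδ]
  refine neg_one_pow_card_roots_lt_mul_det_pos hsymm (fun h => hpath ?_) ?_
  · rwa [← hdet, h, mul_zero, add_zero] at hexpand
  · rw [hν, Fintype.card_sum, Fintype.card_fin, Fintype.card_fin, Fintype.card_fin]
    omega

theorem sum_add_le_of_forall_even {α : Type*} [LinearOrder α] {m : α → ℕ} {e : ℕ} (he : e ≤ 1)
    (F : Finset α) (hm : ∀ s ∈ F, m s ≤ 3)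
    (hpar : ∀ s ∈ F, m s = 3 → Even (∑ r ∈ F with r < s, m r + e)) :
    ∑ s ∈ F, m s + e ≤ 2 * F.card + 1 := by
  induction F using Finset.induction_on_max with
  | empty => simpa using he
  | insert a F ha ih =>
    have haF : a ∉ F := fun h => (ha a h).false
    have hbelow : ∀ s ∈ insert a F, (insert a F).filter (· < s) = F.filter (· < s) := by
      intro s hs
      rw [Finset.filter_insert, if_neg]
      rcases Finset.mem_insert.mp hs with rfl | hs
      exacts [lt_irrefl _, (ha s hs).not_gt]
    have hF := ih (fun s hs => hm s (Finset.mem_insert_of_mem hs)) fun s hs hs3 => by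
      rw [← hbelow s (Finset.mem_insert_of_mem hs)]
      exact hpar s (Finset.mem_insert_of_mem hs) hs3
    have ha3 := hm a (Finset.mem_insert_self a F)
    have hapar := hpar a (Finset.mem_insert_self a F)
    rw [hbelow a (Finset.mem_insert_self a F), Finset.filter_true_of_mem ha] at hapar
    rw [Finset.sum_insert haF, Finset.card_insert_of_notMem haF]
    grind

theorem card_add_le_of_forall_even {α : Type*} [LinearOrder α] {s : Multiset α} {e : ℕ}
    (he : e ≤ 1) (hs : ∀ a, s.count a ≤ 3)
    (hpar : ∀ a, s.count a = 3 → Even ((s.filter (· < a)).card + e)) :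
    s.card + e ≤ 2 * s.toFinset.card + 1 := by
  rw [← Multiset.toFinset_sum_count_eq]
  refine sum_add_le_of_forall_even he _ (fun a _ => hs a) fun a _ ha => ?_
  convert hpar a ha
  rw [← Multiset.toFinset_sum_count_eq, Multiset.toFinset_filter]
  exact Finset.sum_congr rfl fun r hr =>
    (Multiset.count_filter_of_pos (p := (· < a)) (Finset.mem_filter.mp hr).2).symm

theorem le_two_mul_qMat_of_inS_graphJoin_cycleGraph {m : ℕ} (hm : 3 ≤ m)
    {A : Matrix (Fin 1 ⊕ Fin m) (Fin 1 ⊕ Fin m) ℝ}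
    (hA : inS (graphJoin (⊤ : SimpleGraph (Fin 1)) (SimpleGraph.cycleGraph m)) A) :
    m ≤ 2 * qMat A := by
  obtain ⟨n, rfl⟩ := Nat.exists_eq_add_of_le' hm
  obtain ⟨δ, hδ⟩ := exists_forall_count_eq_three_neg_one_pow_mul_pos hA
  obtain ⟨e, he, hpar⟩ : ∃ e ≤ 1, ∀ ν, A.charpoly.roots.count ν = 3 →
      Even ((A.charpoly.roots.filter (· < ν)).card + e) := by
    rcases le_or_gt 0 δ with h | h
    · refine ⟨0, zero_le_one, fun ν hν => ?_⟩
      by_contra hodd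
      have := hδ ν hν
      rw [add_zero, Nat.not_even_iff_odd] at hodd
      rw [hodd.neg_one_pow] at this
      linarith
    · refine ⟨1, le_rfl, fun ν hν => ?_⟩
      by_contra hodd
      have := hδ ν hν
      rw [Nat.even_add_one, not_not] at hodd
      rw [hodd.neg_one_pow] at this
      linarith
  have hcard := card_add_le_of_forall_even he
    (count_roots_charpoly_le_three_of_inS_graphJoin_cycleGraph hA) hpar
  rw [card_roots_charpoly_of_isSymm hA.1, Fintype.card_sum, Fintype.card_fin,
    Fintype.card_fin] at hcard
  rw [qMat, specMultiset]
  omega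

end LowerBound

theorem StrictlyInterlaces.qMat_le {V : Type*} [Fintype V] [DecidableEq V] {n : ℕ}
    {g : Fin n → ℝ} {d : Fin (n + 1) → ℝ} (h : StrictlyInterlaces g d) {N : Matrix V V ℝ} {p : ℕ}
    (hN : specMultiset N = p • Finset.univ.val.map d + Finset.univ.val.map g) :
    qMat N ≤ 2 * n + 1 := by
  rw [qMat, hN, ← h.card_image_union_image]
  refine Finset.card_le_card fun x hx => ?_
  rw [Multiset.mem_toFinset, Multiset.mem_add] at hx
  rw [Finset.mem_union]
  exact hx.imp (fun hx => Multiset.mem_toFinset.mpr (Multiset.mem_of_mem_nsmul hx))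
    fun hx => Multiset.mem_toFinset.mpr hx

theorem qGraph_eq_of_forall_le {V : Type*} [Fintype V] [DecidableEq V] {G : SimpleGraph V} {q : ℕ}
    {N : Matrix V V ℝ} (hN : inS G N) (hNq : qMat N ≤ q) (hq : ∀ A, inS G A → q ≤ qMat A) :
    qGraph G = q := by
  refine IsLeast.csInf_eq ⟨⟨N, hN, hNq.antisymm (hq N hN)⟩, ?_⟩
  rintro _ ⟨A, hA, rfl⟩
  exact hq A hA

theorem statement17_general {k : ℕ} {lam : Fin (k + 2) → ℝ} {mu : Fin (k + 1) → ℝ}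
    (h : StrictlyInterlaces mu lam) :
    (∃ N : Matrix (Fin 1 ⊕ Fin (4 * (k + 2) - 2)) (Fin 1 ⊕ Fin (4 * (k + 2) - 2)) ℝ,
        inS (graphJoin (⊤ : SimpleGraph (Fin 1)) (SimpleGraph.cycleGraph (4 * (k + 2) - 2))) N ∧
          specMultiset N = 3 • (Finset.univ.val.map lam) + Finset.univ.val.map mu) ∧
      qGraph (graphJoin (⊤ : SimpleGraph (Fin 1)) (SimpleGraph.cycleGraph (4 * (k + 2) - 2))) =
        2 * (k + 2) - 1 := by
  rw [show 4 * (k + 2) - 2 = 2 * (2 * k + 3) by omega]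
  obtain ⟨N, hN, hspec⟩ := h.exists_inS_graphJoin_cycleGraph
  refine ⟨⟨N, hN, hspec⟩, qGraph_eq_of_forall_le hN (h.qMat_le hspec) fun A hA => ?_⟩
  have := le_two_mul_qMat_of_inS_graphJoin_cycleGraph (by omega) hA
  omega

/-- Example 3.12: for `m = k + 2 ≥ 2` and any `λ₁ < … < λ_m`, there are
`μ_i ∈ (λ_i, λ_{i+1})` and `N ∈ S(K₁ ∨ C_{4m−2})` with spectrum
`{λ₁^(3), μ₁, λ₂^(3), …, μ_{m−1}, λ_m^(3)}`; moreover `q(K₁ ∨ C_{4m−2}) = 2m − 1`. -/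
theorem statement17 (k : ℕ) (lam : Fin (k + 2) → ℝ) (hlam : StrictMono lam) :
    (∃ mu : Fin (k + 1) → ℝ,
      (∀ i : Fin (k + 1), lam i.castSucc < mu i ∧ mu i < lam i.succ) ∧
      ∃ N : Matrix (Fin 1 ⊕ Fin (4 * (k + 2) - 2)) (Fin 1 ⊕ Fin (4 * (k + 2) - 2)) ℝ,
        inS (graphJoin (⊤ : SimpleGraph (Fin 1))
          (SimpleGraph.cycleGraph (4 * (k + 2) - 2))) N ∧
        specMultiset N = 3 • (Finset.univ.val.map lam) + Finset.univ.val.map mu) ∧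
    qGraph (graphJoin (⊤ : SimpleGraph (Fin 1))
      (SimpleGraph.cycleGraph (4 * (k + 2) - 2))) = 2 * (k + 2) - 1 := by
  have hmid := strictlyInterlaces_midpoint hlam
  exact (statement17_general hmid).imp_left fun hN => ⟨_, hmid, hN⟩
end
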